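/- arXiv:1807.00218 — 2 statements merged into one kernel-verified Lean document; each statement's English description precedes it below -/
import Mathlib

section
/- For every integer n ≥ 4 there is no AME(n,6) state of minimal support, while an AME(3,6) state of minimal support exists; that is, N(6) = 3, where N(6) is the largest n for which an AME(n,6) state of minimal support exists. -/
open scoped BigOperators Classical

noncomputable section

namespace AMEPaper

/-- Combine a configuration on the complement of `B` with a configuration on `B`
into a full configuration on `Fin n`. -/
def combine {n d : ℕ} (B : Finset (Fin n)) (a : {i : Fin n // i ∉ B} → Fin d)
    (b : {i : Fin n // i ∈ B} → Fin d) : Fin n → Fin d :=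
  fun i => if h : i ∈ B then b ⟨i, h⟩ else a ⟨i, h⟩

/-- `ψ` is an absolutely maximally entangled state with `n` sites and local dimension `d`:
it is a unit vector and, for every set `B` of at most `n/2` sites, the reduced density
matrix on `B` equals `d ^ (-|B|)` times the identity. -/
def IsAME (n d : ℕ) (ψ : (Fin n → Fin d) → ℂ) : Prop :=
  (∑ s : Fin n → Fin d, ‖ψ s‖ ^ 2 = 1) ∧
  ∀ B : Finset (Fin n), B.card ≤ n / 2 →
    ∀ b b' : {i : Fin n // i ∈ B} → Fin d,
      (∑ a : {i : Fin n // i ∉ B} → Fin d,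
          ψ (combine B a b) * (starRingEnd ℂ) (ψ (combine B a b'))) =
        if b = b' then ((d : ℂ) ^ B.card)⁻¹ else 0

/-- `ψ` has minimal support: its support in the computational basis has exactly
`d ^ ⌊n/2⌋` elements. -/
def HasMinimalSupport (n d : ℕ) (ψ : (Fin n → Fin d) → ℂ) : Prop :=
  {s : Fin n → Fin d | ψ s ≠ 0}.ncard = d ^ (n / 2)

/-- `C` is an MDS code over the alphabet `Fin d` with wordlength `n` and minimum
Hamming distance `δ`: its minimum distance is exactly `δ` and it meets the Singleton
bound, `|C| = d ^ (n - δ + 1)`. -/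
def IsMDSCode (d n δ : ℕ) (C : Finset (Fin n → Fin d)) : Prop :=
  C.card = d ^ (n - δ + 1) ∧
  (∀ w ∈ C, ∀ w' ∈ C, w ≠ w' → δ ≤ hammingDist w w') ∧
  (∃ w ∈ C, ∃ w' ∈ C, w ≠ w' ∧ hammingDist w w' = δ)

/-- A latin `k`-hypercube of order `d`: fixing all indices but any one of them, the
resulting map `Fin d → Fin d` is a bijection. -/
def IsLatinHypercube (k d : ℕ) (L : (Fin k → Fin d) → Fin d) : Prop :=
  ∀ (i : Fin k) (x : Fin k → Fin d),
    Function.Bijective fun v : Fin d => L (Function.update x i v)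

/-- Two latin `k`-hypercubes are orthogonal if for every pair of distinct indices and
all ways of fixing the remaining indices, the two resulting latin squares are
orthogonal. -/
def AreOrthogonalHypercubes (k d : ℕ) (L M : (Fin k → Fin d) → Fin d) : Prop :=
  ∀ (i j : Fin k), i ≠ j → ∀ x : Fin k → Fin d,
    Function.Injective fun p : Fin d × Fin d =>
      (L (Function.update (Function.update x i p.1) j p.2),
       M (Function.update (Function.update x i p.1) j p.2))

/-- A latin square of order `d`: every row and every column is a bijection. -/
def IsLatinSquare (d : ℕ) (L : Fin d × Fin d → Fin d) : Prop :=
  (∀ i : Fin d, Function.Bijective fun j => L (i, j)) ∧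
  (∀ j : Fin d, Function.Bijective fun i => L (i, j))

def OA {Bk : Type} (f : Bk → Fin 4 → Fin 6) : Prop :=
  ∀ i j, i ≠ j → Function.Bijective fun b => (f b i, f b j)

def Tm {Bk : Type} (f : Bk → Fin 4 → Fin 6) : Matrix Bk (Fin 4 × Fin 6) (ZMod 2) :=
  Matrix.of fun b p => if f b p.1 = p.2 then 1 else 0

theorem Tm_mulVec {Bk : Type} (f : Bk → Fin 4 → Fin 6) (c : Fin 4 × Fin 6 → ZMod 2) (b : Bk) :
    (Tm f).mulVec c b = ∑ i, c (i, f b i) := by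
  simp [Tm, Matrix.mulVec, dotProduct, Fintype.sum_prod_type]

theorem OA.sum_pair {Bk : Type} [Fintype Bk] {f : Bk → Fin 4 → Fin 6} (hf : OA f)
    {M : Type*} [AddCommMonoid M] {i j : Fin 4} (hij : i ≠ j) (g : Fin 6 → Fin 6 → M) :
    ∑ b, g (f b i) (f b j) = ∑ x, ∑ y, g x y := by
  rw [← Fintype.sum_prod_type' g]
  exact (hf i j hij).sum_comp (fun p => g p.1 p.2)

theorem OA.sum_one {Bk : Type} [Fintype Bk] {f : Bk → Fin 4 → Fin 6} (hf : OA f)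
    {M : Type*} [AddCommMonoid M] (i : Fin 4) (g : Fin 6 → M) :
    ∑ b, g (f b i) = 6 • ∑ x, g x := by
  obtain ⟨j, hj⟩ : ∃ j : Fin 4, i ≠ j := ⟨i + 1, by fin_cases i <;> decide⟩
  rw [hf.sum_pair hj (fun x _ => g x)]
  simp [Finset.sum_nsmul]

theorem TT {Bk : Type} [Fintype Bk] {f : Bk → Fin 4 → Fin 6} (hf : OA f)
    (c : Fin 4 × Fin 6 → ZMod 2) (i : Fin 4) (x : Fin 6) :
    (Tm f).transpose.mulVec ((Tm f).mulVec c) (i, x) = ∑ j, if j = i then 0 else ∑ y, c (j, y) := by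
  have h1 : (Tm f).transpose.mulVec ((Tm f).mulVec c) (i, x)
      = ∑ b, ∑ j, (if f b i = x then 1 else 0) * c (j, f b j) := by
    rw [Matrix.mulVec, dotProduct]
    refine Finset.sum_congr rfl fun b _ => ?_
    rw [Tm_mulVec, Finset.mul_sum]
    rfl
  rw [h1, Finset.sum_comm]
  refine Finset.sum_congr rfl fun j _ => ?_
  split_ifs with h
  · subst h
    rw [hf.sum_one j (fun y => (if y = x then 1 else 0) * c (j, y))]
    rw [← Nat.cast_smul_eq_nsmul (ZMod 2)]
    have : ((6 : ℕ) : ZMod 2) = 0 := by decide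
    rw [this, zero_smul]
  · rw [hf.sum_pair (Ne.symm h) (fun z y => (if z = x then (1 : ZMod 2) else 0) * c (j, y))]
    simp [Finset.sum_comm, ← Finset.mul_sum]

theorem finrank_ker_comp_le {K U V W : Type*} [Field K] [AddCommGroup U] [AddCommGroup V]
    [AddCommGroup W] [Module K U] [Module K V] [Module K W] [FiniteDimensional K U]
    [FiniteDimensional K V] (T : U →ₗ[K] V) (S : V →ₗ[K] W) :
    Module.finrank K (LinearMap.ker (S ∘ₗ T)) ≤
      Module.finrank K (LinearMap.ker T) + Module.finrank K (LinearMap.ker S) := by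
  have h := LinearMap.finrank_range_add_finrank_ker (T.domRestrict (LinearMap.ker (S ∘ₗ T)))
  have h1 : LinearMap.range (T.domRestrict (LinearMap.ker (S ∘ₗ T))) ≤ LinearMap.ker S := by
    rintro _ ⟨u, rfl⟩
    exact LinearMap.mem_ker.2 (LinearMap.mem_ker.1 u.2)
  have h2 := Submodule.finrank_mono h1
  have h3 : LinearMap.ker T ≤ LinearMap.ker (S ∘ₗ T) := LinearMap.ker_le_ker_comp _ _
  have h4 : LinearMap.ker (T.domRestrict (LinearMap.ker (S ∘ₗ T)))
      = Submodule.comap (LinearMap.ker (S ∘ₗ T)).subtype (LinearMap.ker T) := by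
    ext u; simp
  rw [h4, (Submodule.comapSubtypeEquivOfLe h3).finrank_eq] at h
  omega

theorem OA.card {Bk : Type} [Fintype Bk] {f : Bk → Fin 4 → Fin 6} (hf : OA f) :
    Fintype.card Bk = 36 := by
  rw [Fintype.card_of_bijective (hf 0 1 (by decide))]; simp

theorem ker_dim {Bk : Type} [Fintype Bk] {f : Bk → Fin 4 → Fin 6} (hf : OA f) :
    4 ≤ Module.finrank (ZMod 2) (LinearMap.ker (Tm f).mulVecLin) := by
  set T := (Tm f).mulVecLin
  set S := (Tm f).transpose.mulVecLin
  have hT := LinearMap.finrank_range_add_finrank_ker T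
  have hS := LinearMap.finrank_range_add_finrank_ker S
  have hr : Module.finrank (ZMod 2) (LinearMap.range S) = Module.finrank (ZMod 2) (LinearMap.range T) :=
    Matrix.rank_transpose (Tm f)
  simp only [Module.finrank_fintype_fun_eq_card, hf.card, Fintype.card_prod, Fintype.card_fin] at hT hS
  have hc := finrank_ker_comp_le T S
  let s : (Fin 4 × Fin 6 → ZMod 2) →ₗ[ZMod 2] (Fin 4 → ZMod 2) :=
    { toFun := fun c i => ∑ y, c (i, y)
      map_add' := fun c d => by ext i; simp [Finset.sum_add_distrib]
      map_smul' := fun c d => by ext i; simp [Finset.mul_sum] }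
  have hs := LinearMap.finrank_range_add_finrank_ker s
  have hs2 := Submodule.finrank_le (LinearMap.range s)
  simp only [Module.finrank_fintype_fun_eq_card, Fintype.card_prod, Fintype.card_fin] at hs hs2
  have hle : LinearMap.ker s ≤ LinearMap.ker (S ∘ₗ T) := by
    intro c hc
    have hc' : ∀ i, ∑ y, c (i, y) = 0 := fun i => congrFun (LinearMap.mem_ker.1 hc) i
    rw [LinearMap.mem_ker]
    ext ⟨i, x⟩
    refine (TT hf c i x).trans ?_
    simp [hc']
  have := Submodule.finrank_mono hle
  omega

theorem mem_kerT {Bk : Type} [Fintype Bk] (f : Bk → Fin 4 → Fin 6) (c : Fin 4 × Fin 6 → ZMod 2) :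
    c ∈ LinearMap.ker (Tm f).mulVecLin ↔ (Tm f).mulVec c = 0 := by
  rw [LinearMap.mem_ker, Matrix.mulVecLin_apply]

theorem f2_aux : ∀ s : Fin 4 → ZMod 2, (∀ i, (∑ j, if j = i then 0 else s j) = 0) →
    ∀ i, s i = 0 := by
  decide +kernel

theorem exists_nontrivial {Bk : Type} [Fintype Bk] {f : Bk → Fin 4 → Fin 6} (hf : OA f) :
    ∃ c : Fin 4 → Fin 6 → ZMod 2, (∀ b, ∑ i, c i (f b i) = 0) ∧ (∀ i, ∑ x, c i x = 0) ∧
      ∃ i x y, c i x ≠ c i y := by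
  have hk := ker_dim hf
  by_contra hcon
  push Not at hcon
  have hcst : ∀ c ∈ LinearMap.ker (Tm f).mulVecLin, ∀ i x y, c (i, x) = c (i, y) := by
    intro c hc
    have hc0 : (Tm f).mulVec c = 0 := (mem_kerT f c).1 hc
    have hA : ∀ b, ∑ i, c (i, f b i) = 0 := fun b => by rw [← Tm_mulVec, hc0]; rfl
    have hB : ∀ i, ∑ x, c (i, x) = 0 := by
      refine f2_aux (fun i => ∑ x, c (i, x)) fun i => ?_
      rw [← TT hf c i 0, hc0, Matrix.mulVec_zero]; rfl
    exact hcon (fun i x => c (i, x)) hA hB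
  let g : LinearMap.ker (Tm f).mulVecLin →ₗ[ZMod 2] (Fin 3 → ZMod 2) :=
    { toFun := fun c i => c.1 (i.castSucc, 0)
      map_add' := fun c d => by ext i; simp
      map_smul' := fun c d => by ext i; simp }
  have hg : Function.Injective g := by
    rw [injective_iff_map_eq_zero]
    intro c hc
    obtain ⟨b, -⟩ := (hf 0 1 (by decide)).2 (0, 0)
    have hb : (Tm f).mulVec c.1 b = 0 := congrFun ((mem_kerT f c.1).1 c.2) b
    rw [Tm_mulVec, Fin.sum_univ_castSucc] at hb
    have h0 : ∀ i : Fin 3, ∀ x, c.1 (i.castSucc, x) = 0 := fun i x =>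
      (hcst c.1 c.2 _ x 0).trans (congrFun hc i)
    simp only [h0, Finset.sum_const_zero, zero_add] at hb
    ext ⟨i, x⟩
    induction i using Fin.lastCases with
    | last => exact (hcst c.1 c.2 _ _ _).trans hb
    | cast i => exact h0 i x
  have := LinearMap.finrank_le_finrank_of_injective hg
  simp at this
  omega


theorem OA.count {Bk : Type} [Fintype Bk] {f : Bk → Fin 4 → Fin 6} (hf : OA f)
    (z : Fin 4 → Fin 6 → ℕ) (hz : ∀ i x, z i x ≤ 1) (hev : ∀ b, 2 ∣ ∑ i, z i (f b i))
    (X : Fin 4 → ℕ) (hX : ∀ i, X i = ∑ x, z i x) :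
    ∃ q, X 0 * X 1 + X 0 * X 2 + X 0 * X 3 + X 1 * X 2 + X 1 * X 3 + X 2 * X 3
        = 3 * (X 0 + X 1 + X 2 + X 3) + 4 * q ∧ (q = 0 → ∀ b, ∑ i, z i (f b i) ≠ 4) := by
  refine ⟨∑ b, if ∑ i, z i (f b i) = 4 then 1 else 0, ?_, ?_⟩
  · have h1 : ∀ i, ∑ b, z i (f b i) = 6 * X i := fun i => by
      rw [hf.sum_one i (z i), hX]; simp
    have h2 : ∀ i j, i ≠ j → ∑ b, z i (f b i) * z j (f b j) = X i * X j := fun i j hij => by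
      rw [hf.sum_pair hij (fun x y => z i x * z j y), hX, hX, Finset.sum_mul_sum]
    have h01 := h2 0 1 (by decide)
    have h02 := h2 0 2 (by decide)
    have h03 := h2 0 3 (by decide)
    have h12 := h2 1 2 (by decide)
    have h13 := h2 1 3 (by decide)
    have h23 := h2 2 3 (by decide)
    have key : ∀ b, z 0 (f b 0) * z 1 (f b 1) + z 0 (f b 0) * z 2 (f b 2)
        + z 0 (f b 0) * z 3 (f b 3) + z 1 (f b 1) * z 2 (f b 2) + z 1 (f b 1) * z 3 (f b 3)
        + z 2 (f b 2) * z 3 (f b 3) + (if ∑ i, z i (f b i) = 4 then 1 else 0) * 0 =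
        (if ∑ i, z i (f b i) = 4 then 1 else 0) * 4 +
        (if ∑ i, z i (f b i) = 0 then 0 else if ∑ i, z i (f b i) = 4 then 2 else 1) := by
      intro b
      have e := hev b
      have e0 := hz 0 (f b 0)
      have e1 := hz 1 (f b 1)
      have e2 := hz 2 (f b 2)
      have e3 := hz 3 (f b 3)
      rw [Fin.sum_univ_four] at *
      generalize z 0 (f b 0) = a0 at *
      generalize z 1 (f b 1) = a1 at *
      generalize z 2 (f b 2) = a2 at *
      generalize z 3 (f b 3) = a3 at *
      interval_cases a0 <;> interval_cases a1 <;> interval_cases a2 <;> interval_cases a3 <;>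
        simp at e ⊢ <;> omega
    have key2 : ∀ b, 2 * (if ∑ i, z i (f b i) = 0 then 0 else if ∑ i, z i (f b i) = 4 then 2 else 1)
        = z 0 (f b 0) + z 1 (f b 1) + z 2 (f b 2) + z 3 (f b 3) := by
      intro b
      have e := hev b
      have e0 := hz 0 (f b 0)
      have e1 := hz 1 (f b 1)
      have e2 := hz 2 (f b 2)
      have e3 := hz 3 (f b 3)
      rw [Fin.sum_univ_four] at *
      split_ifs <;> omega
    have s1 := Finset.sum_congr (rfl : (Finset.univ : Finset Bk) = Finset.univ) fun b _ => key b
    have s2 := Finset.sum_congr (rfl : (Finset.univ : Finset Bk) = Finset.univ) fun b _ => key2 b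
    rw [← Finset.mul_sum] at s2
    simp only [Finset.sum_add_distrib, ← Finset.sum_mul, h01, h02, h03, h12, h13, h23, h1] at s1 s2
    omega
  · intro hq b hb
    rw [Finset.sum_eq_zero_iff] at hq
    have := hq b (Finset.mem_univ b)
    rw [if_pos hb] at this
    omega

def fl (u : ZMod 2) (n : ℕ) : ℕ := if u = 0 then n else 6 - n

theorem arith_aux : ∀ a : Fin 4 → Fin 4, (∃ i, a i ≠ 0 ∧ a i ≠ 3) →
    (∀ u : Fin 4 → ZMod 2, ∑ i, u i = 0 → ∀ X : Fin 4 → ℕ, (∀ i, X i = fl (u i) (2 * (a i).val)) →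
      ∃ q, X 0 * X 1 + X 0 * X 2 + X 0 * X 3 + X 1 * X 2 + X 1 * X 3 + X 2 * X 3
        = 3 * (X 0 + X 1 + X 2 + X 3) + 4 * q) →
    ∃ u : Fin 4 → ZMod 2, ∑ i, u i = 0 ∧ ∀ i, fl (u i) (2 * (a i).val) = 2 := by
  have main : ∀ a : Fin 4 → Fin 4, (∃ i, a i ≠ 0 ∧ a i ≠ 3) →
    (∀ u : Fin 4 → ZMod 2, ∑ i, u i = 0 →
      let X := fun i => fl (u i) (2 * (a i).val)
      3 * (X 0 + X 1 + X 2 + X 3) ≤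
        X 0 * X 1 + X 0 * X 2 + X 0 * X 3 + X 1 * X 2 + X 1 * X 3 + X 2 * X 3 ∧
      (X 0 * X 1 + X 0 * X 2 + X 0 * X 3 + X 1 * X 2 + X 1 * X 3 + X 2 * X 3) % 4 =
      (3 * (X 0 + X 1 + X 2 + X 3)) % 4) →
    ∃ u : Fin 4 → ZMod 2, ∑ i, u i = 0 ∧ ∀ i, fl (u i) (2 * (a i).val) = 2 := by
    unfold fl
    decide +kernel
  intro a ha h
  refine main a ha fun u hu => ?_
  obtain ⟨q, hq⟩ := h u hu _ fun i => rfl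
  dsimp only
  omega

theorem sum_fl (g : Fin 6 → ZMod 2) (u : ZMod 2) : ∑ x, (g x + u).val = fl u (∑ x, (g x).val) := by
  revert g u
  unfold fl
  decide +kernel

theorem exists_two {Bk : Type} [Fintype Bk] {f : Bk → Fin 4 → Fin 6} (hf : OA f) :
    ∃ c : Fin 4 → Fin 6 → ZMod 2, (∀ i, ∑ x, (c i x).val = 2) ∧
      ∀ b, ∑ i, (c i (f b i)).val = 0 ∨ ∑ i, (c i (f b i)).val = 2 := by
  obtain ⟨c, hb, hg, i0, x0, y0, hne⟩ := exists_nontrivial hf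
  have hle : ∀ a : ZMod 2, a.val ≤ 1 := by decide
  have hevc : ∀ (n : ℕ) (h : Fin n → ZMod 2), ∑ i, h i = 0 → 2 ∣ ∑ i, (h i).val := by
    intro n h hh
    rw [← ZMod.natCast_eq_zero_iff]
    push_cast
    simpa using hh
  have hX6 : ∀ i, ∃ a : Fin 4, ∑ x, (c i x).val = 2 * a.val := by
    intro i
    obtain ⟨k, hk⟩ := hevc 6 (c i) (hg i)
    have : ∑ x, (c i x).val ≤ ∑ x : Fin 6, 1 := Finset.sum_le_sum fun x _ => hle _
    simp only [Finset.sum_const, Finset.card_univ, Fintype.card_fin, smul_eq_mul] at this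
    exact ⟨⟨k, by omega⟩, hk⟩
  choose a ha using hX6
  have hw : ∀ u : Fin 4 → ZMod 2, ∑ i, u i = 0 → ∀ b, 2 ∣ ∑ i, (c i (f b i) + u i).val := by
    intro u hu b
    exact hevc 4 (fun i => c i (f b i) + u i) (by rw [Finset.sum_add_distrib, hb, hu, add_zero])
  have hcnt := fun (u : Fin 4 → ZMod 2) (hu : ∑ i, u i = 0) (X : Fin 4 → ℕ)
    (hX : ∀ i, X i = fl (u i) (2 * (a i).val)) =>
    hf.count (fun i x => (c i x + u i).val) (fun _ _ => hle _) (hw u hu) X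
      (fun i => by rw [hX, ← ha, sum_fl])
  have hnon : ∃ i, a i ≠ 0 ∧ a i ≠ 3 := by
    refine ⟨i0, ?_, ?_⟩
    · intro h
      have h' := ha i0
      rw [h] at h'
      revert hne h'
      generalize c i0 = g
      revert g x0 y0
      decide +kernel
    · intro h
      have h' := ha i0
      rw [h] at h'
      revert hne h'
      generalize c i0 = g
      revert g x0 y0
      decide +kernel
  obtain ⟨u, hu, hu2⟩ := arith_aux a hnon fun u hu X hX =>
    (hcnt u hu X hX).imp fun q hq => hq.1
  refine ⟨fun i x => c i x + u i, fun i => by rw [sum_fl, ha, hu2], fun b => ?_⟩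
  obtain ⟨q, hq, hq0⟩ := hcnt u hu (fun _ => 2) (fun i => (hu2 i).symm)
  have h4 := hq0 (by omega) b
  have h2 := hw u hu b
  have : ∑ i, (c i (f b i) + u i).val ≤ ∑ i : Fin 4, 1 := Finset.sum_le_sum fun x _ => hle _
  simp only [Finset.sum_const, Finset.card_univ, Fintype.card_fin, smul_eq_mul] at this
  show ∑ i, (c i (f b i) + u i).val = 0 ∨ ∑ i, (c i (f b i) + u i).val = 2
  omega



/-- words of length four -/
abbrev Wd := ℕ × ℕ × ℕ × ℕ

def bsm : ℕ → ℕ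
  | 0 => 1
  | 1 => 1
  | _ => 0

/-- two different blocks agree in at most one place -/
def compat : Wd → Wd → Bool
  | (a, b, c, d), (a', b', c', d') =>
    match Nat.beq a a', Nat.beq b b', Nat.beq c c', Nat.beq d d' with
    | true, true, true, true => true
    | true, false, false, false => true
    | false, true, false, false => true
    | false, false, true, false => true
    | false, false, false, true => true
    | false, false, false, false => true
    | _, _, _, _ => false

def okW : Wd → Bool
  | (a, b, c, d) =>
    let s := bsm a + bsm b + bsm c + bsm d
    Nat.beq s 0 || Nat.beq s 2

/-- if `y z < 2` then `x = 2 + 2 y + z` -/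
def nrm (x y z : ℕ) : Bool :=
  !(Nat.beq (bsm y + bsm z) 2) || Nat.beq x (2 + 2 * y + z)

def normW : Wd → Bool
  | (a, b, c, d) => nrm a b c && nrm d b c && nrm c a b && nrm b a c

def search : ℕ → List (List Wd) → Bool
  | 0, _ => true
  | _ + 1, [] => true
  | k + 1, s :: rest => s.any fun c => search k (rest.map fun l => l.filter (compat c))

theorem search_sound (P : Wd → Prop) (hP : ∀ c c', P c → P c' → compat c c' = true) :
    ∀ (k : ℕ) (sl : List (List Wd)), (∀ s ∈ sl, ∃ c ∈ s, P c) → search k sl = true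
  | 0, _, _ => rfl
  | _ + 1, [], _ => rfl
  | k + 1, s :: rest, h => by
    obtain ⟨c, hc, hPc⟩ := h s (by simp)
    simp only [search, List.any_eq_true]
    refine ⟨c, hc, search_sound P hP k _ ?_⟩
    intro t ht
    obtain ⟨l, hl, rfl⟩ := List.mem_map.1 ht
    obtain ⟨c', hc', hPc'⟩ := h l (by simp [hl])
    exact ⟨c', List.mem_filter.2 ⟨hc', hP _ _ hPc hPc'⟩, hPc'⟩

def r6 : List ℕ := [0, 1, 2, 3, 4, 5]

def allW : List Wd :=
  (r6.flatMap fun a => r6.flatMap fun b => r6.flatMap fun c => r6.map fun d => (a, b, c, d)).filter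
    fun w => okW w && normW w

def coord : ℕ → Wd → ℕ
  | 0, (a, _, _, _) => a
  | 1, (_, b, _, _) => b
  | 2, (_, _, c, _) => c
  | _, (_, _, _, d) => d

def slot (q : Wd) : List Wd :=
  allW.filter fun w => Nat.beq (coord q.1 w) q.2.2.1 && Nat.beq (coord q.2.1 w) q.2.2.2

def prs : List (ℕ × ℕ) := [(1,2), (0,1), (0,2), (0,3), (1,3), (2,3)]

def order : List Wd :=
  (prs.flatMap fun p => [(p.1, p.2, 0, 0), (p.1, p.2, 0, 1), (p.1, p.2, 1, 0), (p.1, p.2, 1, 1)]) ++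
  ([2, 3, 4, 5].flatMap fun x => [2, 3, 4, 5].map fun y => (0, 1, x, y))

set_option maxRecDepth 100000 in
theorem search_false : search 100 (order.map slot) = false := by
  decide +kernel

theorem mem_r6 {a : ℕ} (h : a < 6) : a ∈ r6 := by
  unfold r6; interval_cases a <;> simp

theorem no_normal {Bk : Type*} (v : Bk → Fin 4 → ℕ)
    (h1 : ∀ b i, v b i < 6)
    (h2 : ∀ i j, i ≠ j → ∀ b b', v b i = v b' i → v b j = v b' j → b = b')
    (h3 : ∀ i j, i ≠ j → ∀ x y, x < 6 → y < 6 → ∃ b, v b i = x ∧ v b j = y)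
    (h4 : ∀ b, okW (v b 0, v b 1, v b 2, v b 3) = true)
    (h5 : ∀ b, normW (v b 0, v b 1, v b 2, v b 3) = true) : False := by
  have key := search_sound (fun w => ∃ b, w = (v b 0, v b 1, v b 2, v b 3)) ?_ 100
    (order.map slot) ?_
  · rw [search_false] at key; cases key
  · rintro _ _ ⟨b, rfl⟩ ⟨b', rfl⟩
    by_cases hb : b = b'
    · subst hb; simp [compat]
    · have h := fun i j hij => fun h h' => hb (h2 i j hij b b' h h')
      have h01 := h 0 1 (by decide)
      have h02 := h 0 2 (by decide)
      have h03 := h 0 3 (by decide)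
      have h12 := h 1 2 (by decide)
      have h13 := h 1 3 (by decide)
      have h23 := h 2 3 (by decide)
      have e : ∀ m n : ℕ, Nat.beq m n = decide (m = n) := fun m n => by
        rw [Bool.eq_iff_iff]; simp
      simp only [compat, e]
      by_cases a0 : v b 0 = v b' 0 <;> by_cases a1 : v b 1 = v b' 1 <;>
      by_cases a2 : v b 2 = v b' 2 <;> by_cases a3 : v b 3 = v b' 3 <;> simp_all
  · intro s hs
    obtain ⟨q, hq, rfl⟩ := List.mem_map.1 hs
    have hmem : ∀ b, (v b 0, v b 1, v b 2, v b 3) ∈ allW := by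
      intro b
      simp only [allW, List.mem_filter, List.mem_flatMap, List.mem_map]
      refine ⟨⟨_, mem_r6 (h1 b 0), _, mem_r6 (h1 b 1), _, mem_r6 (h1 b 2), _, mem_r6 (h1 b 3), rfl⟩,
        ?_⟩
      rw [h4, h5]; rfl
    have hq' : ∃ i j : Fin 4, i ≠ j ∧ q.1 = i ∧ q.2.1 = j ∧ q.2.2.1 < 6 ∧ q.2.2.2 < 6 := by
      revert q; decide +kernel
    obtain ⟨i, j, hij, hi, hj, hx, hy⟩ := hq'
    obtain ⟨b, hb, hb'⟩ := h3 i j hij _ _ hx hy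
    have hco : ∀ i : Fin 4, coord i (v b 0, v b 1, v b 2, v b 3) = v b i := by
      intro i; fin_cases i <;> rfl
    refine ⟨_, List.mem_filter.2 ⟨hmem b, ?_⟩, b, rfl⟩
    rw [hi, hj, hco, hco, hb, hb']; simp



abbrev Lb := Fin 2 ⊕ Fin 2 × Fin 2

def code : Lb → ℕ
  | Sum.inl a => a.val
  | Sum.inr (a, b) => 2 + 2 * a.val + b.val

theorem code_lt : ∀ l, code l < 6 := by decide

theorem bsm_code : ∀ l, bsm (code l) = if l = Sum.inl 0 ∨ l = Sum.inl 1 then 1 else 0 := by decide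

theorem code_inj : ∀ l l', code l = code l' → l = l' := by decide

theorem code_surj : ∀ x, x < 6 → ∃ l, code l = x := by decide

theorem two_aux : ∀ g : Fin 6 → ZMod 2, ∑ x, (g x).val = 2 →
    ∃ p : Fin 2 → Fin 6, p 0 ≠ p 1 ∧ ∀ x, (g x).val = if x = p 0 ∨ x = p 1 then 1 else 0 := by
  have : ∀ g : Fin 6 → ZMod 2, ∑ x, (g x).val = 2 →
      ∃ p q : Fin 6, p ≠ q ∧ ∀ x, (g x).val = if x = p ∨ x = q then 1 else 0 := by
    decide +kernel
  intro g hg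
  obtain ⟨p, q, h, h'⟩ := this g hg
  exact ⟨![p, q], h, h'⟩

theorem exists_label {Bk : Type} {f : Bk → Fin 4 → Fin 6} (hf : OA f)
    (z : Fin 4 → Fin 6 → ℕ) (p : Fin 4 → Fin 2 → Fin 6)
    (hp : ∀ i, p i 0 ≠ p i 1) (hz : ∀ i x, z i x = if x = p i 0 ∨ x = p i 1 then 1 else 0)
    (i j k l : Fin 4) (hij : i ≠ j) (hik : i ≠ k) (hil : i ≠ l) (hjk : j ≠ k)
    (hw : ∀ b, z i (f b i) + z j (f b j) + z k (f b k) + z l (f b l) = 0 ∨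
      z i (f b i) + z j (f b j) + z k (f b k) + z l (f b l) = 2) :
    ∃ e : Lb ≃ Fin 6, (∀ a, e (Sum.inl a) = p i a) ∧
      ∀ b a a', f b j = p j a → f b k = p k a' → f b i = e (Sum.inr (a, a')) := by
  have hz1 : ∀ i a, z i (p i a) = 1 := by
    intro i a
    rw [hz, if_pos]
    fin_cases a
    · exact Or.inl rfl
    · exact Or.inr rfl
  have hz01 : ∀ i x, z i x = 0 ∨ z i x = 1 := by
    intro i x; rw [hz]; split_ifs <;> simp
  have hpinj : ∀ i, Function.Injective (p i) := by
    intro i a a' h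
    have := hp i
    fin_cases a <;> fin_cases a'
    · rfl
    · exact absurd h this
    · exact absurd h.symm this
    · rfl
  have hex : ∀ q : Fin 2 × Fin 2, ∃ b, f b j = p j q.1 ∧ f b k = p k q.2 := by
    intro q
    obtain ⟨b, hb⟩ := (hf j k hjk).2 (p j q.1, p k q.2)
    exact ⟨b, (Prod.ext_iff.1 hb).1, (Prod.ext_iff.1 hb).2⟩
  choose β hβ1 hβ2 using hex
  have hwβ : ∀ q, z i (f (β q) i) = 0 ∧ z l (f (β q) l) = 0 := by
    intro q
    have h := hw (β q)
    rw [hβ1, hβ2, hz1, hz1] at h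
    omega
  have hinj : Function.Injective fun q => f (β q) i := by
    intro q q' h
    by_contra hne
    dsimp only at h
    -- the two blocks through the common point
    have hβne : β q ≠ β q' := by
      intro hb
      apply hne
      refine Prod.ext (hpinj j ?_) (hpinj k ?_)
      · rw [← hβ1, ← hβ1, hb]
      · rw [← hβ2, ← hβ2, hb]
    have h1 : q.1 ≠ q'.1 := by
      intro h1
      apply hβne
      apply (hf i j hij).1
      simp only [h, hβ1, h1]
    have h2 : q.2 ≠ q'.2 := by
      intro h2
      apply hβne
      apply (hf i k hik).1
      simp only [h, hβ2, h2]
    obtain ⟨b, hb⟩ := (hf i l hil).2 (f (β q) i, p l 0)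
    have hbi : f b i = f (β q) i := (Prod.ext_iff.1 hb).1
    have hbl : f b l = p l 0 := (Prod.ext_iff.1 hb).2
    have hcov : ∀ (m : Fin 4) (a a' : Fin 2), a ≠ a' → ∀ x, z m x = 1 → x = p m a ∨ x = p m a' := by
      intro m a a' haa x hx
      rw [hz] at hx
      have hx' : x = p m 0 ∨ x = p m 1 := by
        by_contra hc; rw [if_neg hc] at hx; omega
      fin_cases a <;> fin_cases a'
      · exact absurd rfl haa
      · exact hx'
      · exact hx'.symm
      · exact absurd rfl haa
    have hq : b ≠ β q := by
      intro hbq; have := (hwβ q).2; rw [← hbq, hbl, hz1] at this; omega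
    have hq' : b ≠ β q' := by
      intro hbq; have := (hwβ q').2; rw [← hbq, hbl, hz1] at this; omega
    have hzj : z j (f b j) = 0 := by
      refine (hz01 _ _).resolve_right fun hone => ?_
      rcases hcov j _ _ h1 _ hone with h' | h'
      · exact hq ((hf i j hij).1 (by simp only [hbi, h', hβ1]))
      · exact hq' ((hf i j hij).1 (by simp only [hbi, h', hβ1, h]))
    have hzk : z k (f b k) = 0 := by
      refine (hz01 _ _).resolve_right fun hone => ?_
      rcases hcov k _ _ h2 _ hone with h' | h'
      · exact hq ((hf i k hik).1 (by simp only [hbi, h', hβ2]))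
      · exact hq' ((hf i k hik).1 (by simp only [hbi, h', hβ2, h]))
    have hwb := hw b
    rw [hzj, hzk, hbi, (hwβ q).1, hbl, hz1] at hwb
    omega
  have hall : Function.Injective (Sum.elim (p i) fun q => f (β q) i) := by
    refine (hpinj i).sumElim hinj fun a q h => ?_
    have := (hwβ q).1
    rw [← h, hz1] at this
    omega
  have hbij : Function.Bijective (Sum.elim (p i) fun q => f (β q) i) := by
    rw [Fintype.bijective_iff_injective_and_card]
    exact ⟨hall, by simp⟩
  refine ⟨Equiv.ofBijective _ hbij, fun a => rfl, fun b a a' h h' => ?_⟩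
  have : b = β (a, a') := (hf j k hjk).1 (by simp only [h, h', hβ1, hβ2])
  rw [this]; rfl

theorem nrm_code (x y z : Lb) (h : ∀ a b, y = Sum.inl a → z = Sum.inl b → x = Sum.inr (a, b)) :
    nrm (code x) (code y) (code z) = true := by
  revert x y z
  decide +kernel

theorem no_OA {Bk : Type} [Fintype Bk] (f : Bk → Fin 4 → Fin 6) (hf : OA f) : False := by
  obtain ⟨c, hc2, hcb⟩ := exists_two hf
  choose p hp hz using fun i => two_aux (c i) (hc2 i)
  simp only [Fin.sum_univ_four] at hcb
  have hlab := exists_label hf (fun i x => (c i x).val) p hp hz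
  obtain ⟨e0, h0, h0'⟩ := hlab 0 1 2 3 (by decide) (by decide) (by decide) (by decide)
    (fun b => by have := hcb b; omega)
  obtain ⟨e3, h3, h3'⟩ := hlab 3 1 2 0 (by decide) (by decide) (by decide) (by decide)
    (fun b => by have := hcb b; omega)
  obtain ⟨e2, h2, h2'⟩ := hlab 2 0 1 3 (by decide) (by decide) (by decide) (by decide)
    (fun b => by have := hcb b; omega)
  obtain ⟨e1, h1, h1'⟩ := hlab 1 0 2 3 (by decide) (by decide) (by decide) (by decide)
    (fun b => by have := hcb b; omega)
  obtain ⟨e, he0, he1, he2, he3⟩ : ∃ e : Fin 4 → Lb ≃ Fin 6, e 0 = e0 ∧ e 1 = e1 ∧ e 2 = e2 ∧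
    e 3 = e3 := ⟨![e0, e1, e2, e3], rfl, rfl, rfl, rfl⟩
  subst he0 he1 he2 he3
  have hinl : ∀ i a, e i (Sum.inl a) = p i a := by
    intro i
    fin_cases i
    exacts [h0, h1, h2, h3]
  have hcinj : Function.Injective code := fun _ _ => code_inj _ _
  have hbs : ∀ i x, bsm (code ((e i).symm x)) = (c i x).val := by
    intro i x
    obtain ⟨l, rfl⟩ := (e i).surjective x
    rw [Equiv.symm_apply_apply, hz, ← hinl, ← hinl, bsm_code]
    exact if_congr (or_congr (e i).injective.eq_iff.symm (e i).injective.eq_iff.symm) rfl rfl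
  have hnorm : ∀ i j k, (∀ b a a', f b j = p j a → f b k = p k a' → f b i = e i (Sum.inr (a, a'))) →
      ∀ b, nrm (code ((e i).symm (f b i))) (code ((e j).symm (f b j))) (code ((e k).symm (f b k)))
        = true := by
    intro i j k h b
    refine nrm_code _ _ _ fun a a' ha ha' => ?_
    rw [Equiv.symm_apply_eq] at ha ha' ⊢
    rw [hinl] at ha ha'
    exact h b a a' ha ha'
  refine no_normal (fun b i => code ((e i).symm (f b i))) (fun b i => code_lt _) ?_ ?_ ?_ ?_
  · intro i j hij b b' h h'
    apply (hf i j hij).1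
    exact Prod.ext ((e i).symm.injective (hcinj h)) ((e j).symm.injective (hcinj h'))
  · intro i j hij x y hx hy
    obtain ⟨l, rfl⟩ := code_surj x hx
    obtain ⟨l', rfl⟩ := code_surj y hy
    obtain ⟨b, hb⟩ := (hf i j hij).2 (e i l, e j l')
    obtain ⟨hb1, hb2⟩ := Prod.ext_iff.1 hb
    dsimp only at hb1 hb2
    exact ⟨b, by rw [hb1, Equiv.symm_apply_apply], by rw [hb2, Equiv.symm_apply_apply]⟩
  · intro b
    simp only [okW, hbs]
    rcases hcb b with h | h <;> rw [h] <;> rfl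
  · intro b
    simp only [normW, hnorm 0 1 2 h0', hnorm 3 1 2 h3', hnorm 2 0 1 h2', hnorm 1 0 2 h1']
    rfl


theorem combine_mem {n d : ℕ} {B : Finset (Fin n)} (a : {i : Fin n // i ∉ B} → Fin d)
    (b : {i : Fin n // i ∈ B} → Fin d) {i : Fin n} (h : i ∈ B) : combine B a b i = b ⟨i, h⟩ := by
  simp [combine, h]

theorem combine_not_mem {n d : ℕ} {B : Finset (Fin n)} (a : {i : Fin n // i ∉ B} → Fin d)
    (b : {i : Fin n // i ∈ B} → Fin d) {i : Fin n} (h : i ∉ B) : combine B a b i = a ⟨i, h⟩ := by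
  simp [combine, h]

theorem supp_surj {n : ℕ} {ψ : (Fin n → Fin 6) → ℂ} (h : IsAME n 6 ψ) (B : Finset (Fin n))
    (hB : B.card = n / 2) (t : Fin n → Fin 6) : ∃ s, ψ s ≠ 0 ∧ ∀ i ∈ B, s i = t i := by
  have h2 := h.2 B hB.le (fun i => t i) (fun i => t i)
  rw [if_pos rfl] at h2
  have hne : (((6 : ℕ) : ℂ) ^ B.card)⁻¹ ≠ 0 := by simp
  rw [← h2] at hne
  obtain ⟨a, -, ha⟩ := Finset.exists_ne_zero_of_sum_ne_zero hne
  exact ⟨_, left_ne_zero_of_mul ha, fun i hi => combine_mem _ _ hi⟩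

theorem supp_inj {n : ℕ} {ψ : (Fin n → Fin 6) → ℂ} (h : IsAME n 6 ψ) (hm : HasMinimalSupport n 6 ψ)
    (B : Finset (Fin n)) (hB : B.card = n / 2) (s s' : Fin n → Fin 6) (hs : ψ s ≠ 0)
    (hs' : ψ s' ≠ 0) (heq : ∀ i ∈ B, s i = s' i) : s = s' := by
  let r : {s : Fin n → Fin 6 // ψ s ≠ 0} → ({i : Fin n // i ∈ B} → Fin 6) := fun s i => s.1 i
  have hsurj : Function.Surjective r := by
    intro b
    obtain ⟨s, hs, hst⟩ := supp_surj h B hB (fun i => if hi : i ∈ B then b ⟨i, hi⟩ else 0)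
    refine ⟨⟨s, hs⟩, ?_⟩
    ext1 i
    simp only [r]
    rw [hst i i.2, dif_pos i.2]
  have hcard : Fintype.card {s : Fin n → Fin 6 // ψ s ≠ 0} =
      Fintype.card ({i : Fin n // i ∈ B} → Fin 6) := by
    have h1 : Nat.card {s : Fin n → Fin 6 // ψ s ≠ 0} = 6 ^ (n / 2) := hm
    rw [← Nat.card_eq_fintype_card, h1]
    simp [hB]
  have hbij := (Fintype.bijective_iff_surjective_and_card r).2 ⟨hsurj, hcard⟩
  have := @hbij.1 ⟨s, hs⟩ ⟨s', hs'⟩ (by ext1 i; exact heq i i.2)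
  exact congrArg Subtype.val this

theorem no_AME (n : ℕ) (hn : 4 ≤ n) :
    ¬ ∃ ψ : (Fin n → Fin 6) → ℂ, IsAME n 6 ψ ∧ HasMinimalSupport n 6 ψ := by
  rintro ⟨ψ, h, hm⟩
  let ι : Fin 4 → Fin n := Fin.castLE hn
  have hι : Function.Injective ι := Fin.castLE_injective hn
  obtain ⟨C, hC, hCc⟩ : ∃ C ⊆ (Finset.univ.image ι)ᶜ, C.card = n / 2 - 2 := by
    apply Finset.exists_subset_card_eq
    rw [Finset.card_compl, Finset.card_image_of_injective _ hι]
    simp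
    omega
  have hCι : ∀ i, ι i ∉ C := by
    intro i hi
    have := hC hi
    simp at this
  have hB : ∀ i j, i ≠ j → (insert (ι i) (insert (ι j) C)).card = n / 2 := by
    intro i j hij
    rw [Finset.card_insert_of_notMem, Finset.card_insert_of_notMem (hCι j), hCc]
    · omega
    · simp [hCι, hι.eq_iff, hij]
  refine no_OA (Bk := {s : Fin n → Fin 6 // ψ s ≠ 0 ∧ ∀ i ∈ C, s i = 0}) (fun s i => s.1 (ι i)) ?_
  intro i j hij
  constructor
  · rintro ⟨s, hs, hs0⟩ ⟨s', hs', hs0'⟩ heq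
    obtain ⟨h1, h2⟩ := Prod.ext_iff.1 heq
    dsimp only at h1 h2
    have := supp_inj h hm _ (hB i j hij) s s' hs hs' (by
      intro k hk
      rw [Finset.mem_insert, Finset.mem_insert] at hk
      rcases hk with rfl | rfl | hk
      · exact h1
      · exact h2
      · rw [hs0 k hk, hs0' k hk])
    exact Subtype.ext this
  · rintro ⟨x, y⟩
    obtain ⟨s, hs, hst⟩ := supp_surj h _ (hB i j hij)
      (fun k => if k = ι i then x else if k = ι j then y else 0)
    refine ⟨⟨s, hs, fun k hk => ?_⟩, ?_⟩
    · rw [hst k (by simp [hk]), if_neg, if_neg]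
      · rintro rfl; exact hCι _ hk
      · rintro rfl; exact hCι _ hk
    · have h1 := hst (ι i) (by simp)
      have h2 := hst (ι j) (by simp)
      simp only [if_true] at h1
      rw [if_neg (fun h => hij (hι h).symm), if_pos rfl] at h2
      simp only [h1, h2]

/-- the GHZ state -/
def ghz (s : Fin 3 → Fin 6) : ℂ := if ∃ x, s = fun _ => x then ((Real.sqrt 6)⁻¹ : ℝ) else 0

theorem ghz_const (x : Fin 6) : ghz (fun _ => x) = ((Real.sqrt 6)⁻¹ : ℝ) := if_pos ⟨x, rfl⟩

theorem ghz_sum (g : ℂ → ℝ) (hg : g 0 = 0) :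
    ∑ s : Fin 3 → Fin 6, g (ghz s) = 6 * g ((Real.sqrt 6)⁻¹ : ℝ) := by
  have hinj : Function.Injective (fun (x : Fin 6) (_ : Fin 3) => x) := fun x y h => congrFun h 0
  have h : ∑ s : Fin 3 → Fin 6, g (ghz s) =
      ∑ s ∈ Finset.univ.image (fun (x : Fin 6) (_ : Fin 3) => x), g (ghz s) := by
    symm
    apply Finset.sum_subset (Finset.subset_univ _)
    intro s _ hs
    rw [ghz, if_neg, hg]
    rintro ⟨x, rfl⟩
    exact hs (Finset.mem_image_of_mem _ (Finset.mem_univ x))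
  rw [h, Finset.sum_image (fun _ _ _ _ h => hinj h)]
  simp only [ghz_const]
  simp

theorem sq6 : (((Real.sqrt 6)⁻¹ : ℝ) : ℂ) * (starRingEnd ℂ) (((Real.sqrt 6)⁻¹ : ℝ) : ℂ) = 6⁻¹ := by
  rw [Complex.conj_ofReal, ← Complex.ofReal_mul, ← mul_inv, Real.mul_self_sqrt (by norm_num)]
  norm_num

theorem ghz_norm : ∑ s : Fin 3 → Fin 6, ‖ghz s‖ ^ 2 = 1 := by
  rw [ghz_sum (fun z => ‖z‖ ^ 2) (by simp)]
  simp

theorem ghz_AME : IsAME 3 6 ghz := by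
  refine ⟨ghz_norm, ?_⟩
  intro B hB b b'
  have hB1 : B.card ≤ 1 := by simpa using hB
  rcases Nat.le_one_iff_eq_zero_or_eq_one.1 hB1 with h0 | h1
  · have hBe : B = ∅ := Finset.card_eq_zero.1 h0
    subst hBe
    have hbb : b = b' := by ext i; exact absurd i.2 (Finset.notMem_empty _)
    subst hbb
    rw [if_pos rfl]
    have hbij : Function.Bijective (fun a : {i : Fin 3 // i ∉ (∅ : Finset (Fin 3))} → Fin 6 =>
        combine ∅ a b) := by
      constructor
      · intro a a' h
        ext1 i
        have := congrFun h i.1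
        simpa [combine] using this
      · intro s
        exact ⟨fun i => s i, by ext1 i; simp [combine]⟩
    have := hbij.sum_comp (fun s => ghz s * (starRingEnd ℂ) (ghz s))
    rw [this]
    simp only [Complex.mul_conj, Complex.normSq_eq_norm_sq]
    rw [← Complex.ofReal_sum, ghz_norm]
    simp
  · obtain ⟨i, rfl⟩ := Finset.card_eq_one.1 h1
    have hi : i ∈ ({i} : Finset (Fin 3)) := Finset.mem_singleton_self i
    obtain ⟨j, hj⟩ : ∃ j : Fin 3, j ∉ ({i} : Finset (Fin 3)) :=
      ⟨i + 1, by fin_cases i <;> decide⟩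
    have hbext : ∀ b b' : {k : Fin 3 // k ∈ ({i} : Finset (Fin 3))} → Fin 6,
        b ⟨i, hi⟩ = b' ⟨i, hi⟩ → b = b' := by
      intro b b' h
      ext1 ⟨k, hk⟩
      have := Finset.mem_singleton.1 hk
      subst this
      exact h
    split_ifs with hbb
    · subst hbb
      rw [Finset.sum_eq_single (fun _ => b ⟨i, hi⟩)]
      · have : combine {i} (fun _ => b ⟨i, hi⟩) b = fun _ => b ⟨i, hi⟩ := by
          ext1 k
          by_cases hk : k ∈ ({i} : Finset (Fin 3))
          · rw [combine_mem _ _ hk]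
            congr
            exact Finset.mem_singleton.1 hk
          · rw [combine_not_mem _ _ hk]
        rw [this, ghz_const, sq6]
        simp
      · intro a _ ha
        rw [ghz, if_neg, zero_mul]
        rintro ⟨x, hx⟩
        apply ha
        have hx1 := congrFun hx i
        rw [combine_mem _ _ hi] at hx1
        ext1 k
        have := congrFun hx k
        rw [combine_not_mem _ _ k.2] at this
        rw [this, hx1]
      · intro h; exact absurd (Finset.mem_univ _) h
    · apply Finset.sum_eq_zero
      intro a _
      by_contra hne
      have hn1 := left_ne_zero_of_mul hne
      have hn2 : ghz (combine {i} a b') ≠ 0 := by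
        intro h; apply hne; rw [h, map_zero, mul_zero]
      obtain ⟨x, hx⟩ : ∃ x, combine {i} a b = fun _ => x := by
        by_contra hc; exact hn1 (if_neg hc)
      obtain ⟨y, hy⟩ : ∃ x, combine {i} a b' = fun _ => x := by
        by_contra hc; exact hn2 (if_neg hc)
      apply hbb
      apply hbext
      have e1 := congrFun hx i
      have e2 := congrFun hx j
      have e3 := congrFun hy i
      have e4 := congrFun hy j
      rw [combine_mem _ _ hi] at e1 e3
      rw [combine_not_mem _ _ hj] at e2 e4
      rw [e1, e3, ← e2, ← e4]

theorem ghz_min : HasMinimalSupport 3 6 ghz := by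
  have hinj : Function.Injective (fun (x : Fin 6) (_ : Fin 3) => x) := fun x y h => congrFun h 0
  have : {s : Fin 3 → Fin 6 | ghz s ≠ 0} = Set.range (fun (x : Fin 6) (_ : Fin 3) => x) := by
    ext s
    constructor
    · intro hs
      by_contra hc
      exact hs (if_neg fun ⟨x, hx⟩ => hc ⟨x, hx.symm⟩)
    · rintro ⟨x, rfl⟩
      simp [ghz_const]
  rw [HasMinimalSupport, this, ← Set.image_univ, Set.ncard_image_of_injective _ hinj]
  simp


/-- `𝒩(6) = 3`: no minimally supported `AME(n,6)` state exists for `n ≥ 4`, while a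
minimally supported `AME(3,6)` state exists. -/
theorem N_six_eq_three :
    (∀ n : ℕ, 4 ≤ n →
      ¬ ∃ ψ : (Fin n → Fin 6) → ℂ, IsAME n 6 ψ ∧ HasMinimalSupport n 6 ψ) ∧
    (∃ ψ : (Fin 3 → Fin 6) → ℂ, IsAME 3 6 ψ ∧ HasMinimalSupport 3 6 ψ) :=
  ⟨no_AME, ghz, ghz_AME, ghz_min⟩

end AMEPaper
end
end

section
/- An AME(8,7) state of minimal support exists, and for every integer n ≥ 9 no AME(n,7) state of minimal support exists; that is, N(7) = 8, where N(7) is the largest n for which an AME(n,7) state of minimal support exists. -/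
open scoped BigOperators Classical

noncomputable section

namespace AMEPaper

/-- One step of the search: codes of items sharing a colour, exclusive fields, degree fields, values. -/
def stepData : List (List ℕ × List ℕ × List ℕ × List ℕ) := [
  ([3, 5], [1, 2, 0], [1, 2], [0]),
  ([7], [1, 2, 9], [], [1]),
  ([11], [1, 3, 10], [], [2]),
  ([19], [1, 4, 11], [], [3]),
  ([35], [1, 5, 12], [], [4]),
  ([67], [1, 6, 13], [], [5]),
  ([37], [2, 5, 19], [], [0, 1, 2, 3, 4, 5]),
  ([13], [2, 3, 17], [], [0, 1, 2, 3, 4, 5]),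
  ([21], [2, 4, 18], [], [0, 1, 2, 3, 4, 5]),
  ([69], [2, 6, 20], [], [0, 1, 2, 3, 4, 5]),
  ([9, 17], [3, 4, 0], [3, 4], [0, 1, 2, 3, 4, 5]),
  ([73], [3, 6, 27], [], [0, 1, 2, 3, 4, 5]),
  ([81], [4, 6, 34], [], [0, 1, 2, 3, 4, 5]),
  ([25], [3, 4, 25], [], [0, 1, 2, 3, 4, 5]),
  ([41], [3, 5, 26], [], [0, 1, 2, 3, 4, 5]),
  ([49], [4, 5, 33], [], [0, 1, 2, 3, 4, 5]),
  ([33, 65], [5, 6, 0], [5, 6], [0, 1, 2, 3, 4, 5]),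
  ([97], [5, 6, 41], [], [0, 1, 2, 3, 4, 5]),
  ([100], [19, 20, 41], [], [0, 1, 2, 3, 4, 5]),
  ([98], [12, 13, 41], [], [0, 1, 2, 3, 4, 5]),
  ([38], [9, 12, 19], [], [0, 1, 2, 3, 4, 5]),
  ([70], [9, 13, 20], [], [0, 1, 2, 3, 4, 5]),
  ([44], [17, 19, 26], [], [0, 1, 2, 3, 4, 5]),
  ([52], [18, 19, 33], [], [0, 1, 2, 3, 4, 5]),
  ([36], [19], [2, 5], [0, 1, 2, 3, 4, 5]),
  ([104], [26, 27, 41], [], [0, 1, 2, 3, 4, 5]),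
  ([112], [33, 34, 41], [], [0, 1, 2, 3, 4, 5]),
  ([96], [41], [5, 6], [0, 1, 2, 3, 4, 5]),
  ([56], [25, 26, 33], [], [0, 1, 2, 3, 4, 5]),
  ([42], [10, 12, 26], [], [0, 1, 2, 3, 4, 5]),
  ([50], [11, 12, 33], [], [0, 1, 2, 3, 4, 5]),
  ([48], [33], [4, 5], [0, 1, 2, 3, 4, 5]),
  ([40], [26], [3, 5], [0, 1, 2, 3, 4, 5]),
  ([88], [25, 27, 34], [], [0, 1, 2, 3, 4, 5]),
  ([22], [9, 11, 18], [], [0, 1, 2, 3, 4, 5]),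
  ([14], [9, 10, 17], [], [0, 1, 2, 3, 4, 5]),
  ([26], [10, 11, 25], [], [0, 1, 2, 3, 4, 5]),
  ([28], [17, 18, 25], [], [0, 1, 2, 3, 4, 5]),
  ([24], [25], [3, 4], [0, 1, 2, 3, 4, 5]),
  ([84], [18, 20, 34], [], [0, 1, 2, 3, 4, 5]),
  ([20], [18], [2, 4], [0, 1, 2, 3, 4, 5]),
  ([82], [11, 13, 34], [], [0, 1, 2, 3, 4, 5]),
  ([80], [34], [4, 6], [0, 1, 2, 3, 4, 5]),
  ([76], [17, 20, 27], [], [0, 1, 2, 3, 4, 5]),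
  ([68], [20], [2, 6], [0, 1, 2, 3, 4, 5]),
  ([74], [10, 13, 27], [], [0, 1, 2, 3, 4, 5]),
  ([72], [27], [3, 6], [0, 1, 2, 3, 4, 5]),
  ([6], [9], [1, 2], [0, 1, 2, 3, 4, 5]),
  ([10], [10], [1, 3], [0, 1, 2, 3, 4, 5])]

def stepLits : List (ℕ × ℕ × ℕ × List ℕ) := [
  (3, 4161, 4160, [0]),
  (7, 18014398509486144, 0, [1]),
  (11, 1152921504607109184, 0, [2]),
  (19, 73786976294854983744, 0, [3]),
  (35, 4722366482870718955584, 0, [4]),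
  (67, 302231454903726013153344, 0, [5]),
  (37, 20769187434139310514121986390626304, 0, [0, 1, 2, 3, 4, 5]),
  (13, 5070602400912917605986813087744, 0, [0, 1, 2, 3, 4, 5]),
  (21, 324518553658426726783156037357568, 0, [0, 1, 2, 3, 4, 5]),
  (69, 1329227995784915872903807128999825408, 0, [0, 1, 2, 3, 4, 5]),
  (9, 17039361, 17039360, [0, 1, 2, 3, 4, 5]),
  (73, 5846006549323611672814739330865132078692449910784, 0, [0, 1, 2, 3, 4, 5]),
  (81, 25711008708143844408671393477458601640355247900524754101075968, 0, [0, 1, 2, 3, 4, 5]),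
  (25, 1427247692705959881058285969449495136399785984, 0, [0, 1, 2, 3, 4, 5]),
  (41, 91343852333181432387730302044767688729569787904, 0, [0, 1, 2, 3, 4, 5]),
  (49, 401734511064747568885490523085290650630550748445699299344384, 0, [0, 1, 2, 3, 4, 5]),
  (33, 69793218561, 69793218560, [0, 1, 2, 3, 4, 5]),
  (97, 113078212145816597093331040047546785012958969400039613319782796952520884224, 0, [0, 1, 2, 3, 4, 5]),
  (100, 113078212145816597093331040047546785014308966583258668503200725928324890624, 0, [0, 1, 2, 3, 4, 5]),
  (98, 113078212145816597093331040047546785012958969400039920273604183409666555904, 0, [0, 1, 2, 3, 4, 5]),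
  (38, 20769187434144032898619253471576064, 0, [0, 1, 2, 3, 4, 5]),
  (70, 1329227995785218104376725116083503104, 0, [0, 1, 2, 3, 4, 5]),
  (44, 91343852333202206645766842268199416700625485824, 0, [0, 1, 2, 3, 4, 5]),
  (52, 401734511064747568885490544178996638428287989350839546281984, 0, [0, 1, 2, 3, 4, 5]),
  (36, 20769187434139310514121985316880384, 1073745920, [0, 1, 2, 3, 4, 5]),
  (104, 113078212145816597093331045984897186669752074602509246229682564234953621504, 0, [0, 1, 2, 3, 4, 5]),
  (112, 113078212145842709836550248639524341896959513292330599118431767266301313024, 0, [0, 1, 2, 3, 4, 5]),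
  (96, 113078212145816597093331040047546785012958969400039613319782796882727665664, 69793218560, [0, 1, 2, 3, 4, 5]),
  (56, 401734511064840339985516410477559439218564965629563087355904, 0, [0, 1, 2, 3, 4, 5]),
  (42, 91343852333181432387730306768287093102747844608, 0, [0, 1, 2, 3, 4, 5]),
  (50, 401734511064747568885490523085290650635346901904862692245504, 0, [0, 1, 2, 3, 4, 5]),
  (48, 401734511064747568885490523085290650630550748445698208825344, 1090519040, [0, 1, 2, 3, 4, 5]),
  (40, 91343852333181432387730302044767688728495783936, 1074003968, [0, 1, 2, 3, 4, 5]),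
  (88, 25711008708149691842468409795091297437972082482098445477740544, 0, [0, 1, 2, 3, 4, 5]),
  (22, 324518553658500531773849368264704, 0, [0, 1, 2, 3, 4, 5]),
  (14, 5070602400914088541889929150464, 0, [0, 1, 2, 3, 4, 5]),
  (26, 1427247692705959881058286044389392935827800064, 0, [0, 1, 2, 3, 4, 5]),
  (28, 1427247692706289470214345309093884279216144384, 0, [0, 1, 2, 3, 4, 5]),
  (24, 1427247692705959881058285969449495136382746624, 17039360, [0, 1, 2, 3, 4, 5]),
  (84, 25711008708143844408671394807011115978929547531114901665742848, 0, [0, 1, 2, 3, 4, 5]),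
  (20, 324518553658426726783156020576256, 16781312, [0, 1, 2, 3, 4, 5]),
  (82, 25711008708143844408671393477458601640657553142404637496705024, 0, [0, 1, 2, 3, 4, 5]),
  (80, 25711008708143844408671393477458601640355247900524685364822016, 68736253952, [0, 1, 2, 3, 4, 5]),
  (76, 5846006549324940905881126647650953491670823337984, 0, [0, 1, 2, 3, 4, 5]),
  (68, 1329227995784915872903807060280344576, 68719480832, [0, 1, 2, 3, 4, 5]),
  (74, 5846006549323611672814739633097739903785630695424, 0, [0, 1, 2, 3, 4, 5]),
  (72, 5846006549323611672814739330865132078623730171904, 68719738880, [0, 1, 2, 3, 4, 5]),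
  (6, 18014398509481984, 4160, [0, 1, 2, 3, 4, 5]),
  (10, 1152921504606846976, 262208, [0, 1, 2, 3, 4, 5])]

def paschTable : List (List (ℕ × ℕ × ℕ × ℕ)) := [
  [(14, 50, 84, 104), (14, 50, 100, 88), (14, 82, 52, 104), (14, 82, 100, 56), (14, 98, 52, 88), (14, 98, 84, 56), (22, 42, 76, 112), (22, 42, 100, 88), (22, 74, 44, 112), (22, 74, 100, 56), (22, 98, 44, 88), (22, 98, 76, 56), (38, 26, 76, 112), (38, 26, 84, 104), (38, 74, 28, 112), (38, 74, 84, 56), (38, 82, 28, 104), (38, 82, 76, 56), (70, 26, 44, 112), (70, 26, 52, 104), (70, 42, 28, 112), (70, 42, 52, 88), (70, 50, 28, 104), (70, 50, 44, 88), (26, 98, 44, 84), (26, 98, 76, 52), (42, 82, 28, 100), (42, 82, 76, 52), (74, 50, 28, 100), (74, 50, 44, 84)],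
  [(13, 49, 84, 104), (13, 49, 100, 88), (13, 81, 52, 104), (13, 81, 100, 56), (13, 97, 52, 88), (13, 97, 84, 56), (21, 41, 76, 112), (21, 41, 100, 88), (21, 73, 44, 112), (21, 73, 100, 56), (21, 97, 44, 88), (21, 97, 76, 56), (37, 25, 76, 112), (37, 25, 84, 104), (37, 73, 28, 112), (37, 73, 84, 56), (37, 81, 28, 104), (37, 81, 76, 56), (69, 25, 44, 112), (69, 25, 52, 104), (69, 41, 28, 112), (69, 41, 52, 88), (69, 49, 28, 104), (69, 49, 44, 88), (25, 97, 44, 84), (25, 97, 76, 52), (41, 81, 28, 100), (41, 81, 76, 52), (73, 49, 28, 100), (73, 49, 44, 84)],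
  [(11, 49, 82, 104), (11, 49, 98, 88), (11, 81, 50, 104), (11, 81, 98, 56), (11, 97, 50, 88), (11, 97, 82, 56), (19, 41, 74, 112), (19, 41, 98, 88), (19, 73, 42, 112), (19, 73, 98, 56), (19, 97, 42, 88), (19, 97, 74, 56), (35, 25, 74, 112), (35, 25, 82, 104), (35, 73, 26, 112), (35, 73, 82, 56), (35, 81, 26, 104), (35, 81, 74, 56), (67, 25, 42, 112), (67, 25, 50, 104), (67, 41, 26, 112), (67, 41, 50, 88), (67, 49, 26, 104), (67, 49, 42, 88), (25, 97, 42, 82), (25, 97, 74, 50), (41, 81, 26, 98), (41, 81, 74, 50), (73, 49, 26, 98), (73, 49, 42, 82)],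
  [(7, 49, 82, 100), (7, 49, 98, 84), (7, 81, 50, 100), (7, 81, 98, 52), (7, 97, 50, 84), (7, 97, 82, 52), (19, 37, 70, 112), (19, 37, 98, 84), (19, 69, 38, 112), (19, 69, 98, 52), (19, 97, 38, 84), (19, 97, 70, 52), (35, 21, 70, 112), (35, 21, 82, 100), (35, 69, 22, 112), (35, 69, 82, 52), (35, 81, 22, 100), (35, 81, 70, 52), (67, 21, 38, 112), (67, 21, 50, 100), (67, 37, 22, 112), (67, 37, 50, 84), (67, 49, 22, 100), (67, 49, 38, 84), (21, 97, 38, 82), (21, 97, 70, 50), (37, 81, 22, 98), (37, 81, 70, 50), (69, 49, 22, 98), (69, 49, 38, 82)],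
  [(7, 41, 74, 100), (7, 41, 98, 76), (7, 73, 42, 100), (7, 73, 98, 44), (7, 97, 42, 76), (7, 97, 74, 44), (11, 37, 70, 104), (11, 37, 98, 76), (11, 69, 38, 104), (11, 69, 98, 44), (11, 97, 38, 76), (11, 97, 70, 44), (35, 13, 70, 104), (35, 13, 74, 100), (35, 69, 14, 104), (35, 69, 74, 44), (35, 73, 14, 100), (35, 73, 70, 44), (67, 13, 38, 104), (67, 13, 42, 100), (67, 37, 14, 104), (67, 37, 42, 76), (67, 41, 14, 100), (67, 41, 38, 76), (13, 97, 38, 74), (13, 97, 70, 42), (37, 73, 14, 98), (37, 73, 70, 42), (69, 41, 14, 98), (69, 41, 38, 74)],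
  [(7, 25, 74, 84), (7, 25, 82, 76), (7, 73, 26, 84), (7, 73, 82, 28), (7, 81, 26, 76), (7, 81, 74, 28), (11, 21, 70, 88), (11, 21, 82, 76), (11, 69, 22, 88), (11, 69, 82, 28), (11, 81, 22, 76), (11, 81, 70, 28), (19, 13, 70, 88), (19, 13, 74, 84), (19, 69, 14, 88), (19, 69, 74, 28), (19, 73, 14, 84), (19, 73, 70, 28), (67, 13, 22, 88), (67, 13, 26, 84), (67, 21, 14, 88), (67, 21, 26, 76), (67, 25, 14, 84), (67, 25, 22, 76), (13, 81, 22, 74), (13, 81, 70, 26), (21, 73, 14, 82), (21, 73, 70, 26), (69, 25, 14, 82), (69, 25, 22, 74)],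
  [(7, 25, 42, 52), (7, 25, 50, 44), (7, 41, 26, 52), (7, 41, 50, 28), (7, 49, 26, 44), (7, 49, 42, 28), (11, 21, 38, 56), (11, 21, 50, 44), (11, 37, 22, 56), (11, 37, 50, 28), (11, 49, 22, 44), (11, 49, 38, 28), (19, 13, 38, 56), (19, 13, 42, 52), (19, 37, 14, 56), (19, 37, 42, 28), (19, 41, 14, 52), (19, 41, 38, 28), (35, 13, 22, 56), (35, 13, 26, 52), (35, 21, 14, 56), (35, 21, 26, 44), (35, 25, 14, 52), (35, 25, 22, 44), (13, 49, 22, 42), (13, 49, 38, 26), (21, 41, 14, 50), (21, 41, 38, 26), (37, 25, 14, 50), (37, 25, 22, 42)]]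

def leafCheck (col : ℕ → ℕ) : Bool :=
  paschTable.all fun l => l.any fun x =>
    !(Nat.beq (col x.1) (col x.2.1)) && (!(Nat.beq (col x.1) (col x.2.2.1)) &&
    (!(Nat.beq (col x.1) (col x.2.2.2)) && (!(Nat.beq (col x.2.1) (col x.2.2.1)) &&
    (!(Nat.beq (col x.2.1) (col x.2.2.2)) && !(Nat.beq (col x.2.2.1) (col x.2.2.2))))))

def srch : List (ℕ × ℕ × ℕ × List ℕ) → ℕ → ℕ → ℕ → (ℕ → ℕ) → Bool
  | [], _, _, _, col => leafCheck col
  | x :: r, s, e1, e2, col => x.2.2.2.any fun v =>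
      (Nat.beq (Nat.land s (Nat.shiftLeft x.2.1 v)) 0) &&
      ((Nat.beq (Nat.land e2 (Nat.shiftLeft x.2.2.1 v)) 0) &&
        srch r (Nat.lor s (Nat.shiftLeft x.2.1 v)) (Nat.lor e1 (Nat.shiftLeft x.2.2.1 v))
          (Nat.lor e2 (Nat.land e1 (Nat.shiftLeft x.2.2.1 v)))
          (fun m => cond (Nat.beq m x.1) v (col m)))

theorem srch_false : srch stepLits 0 0 0 (fun _ => 0) = false := by decide +kernel

/-- Three-wise version of `List.Pairwise`. -/
def Pw3 {α : Type} (R : α → α → α → Prop) : List α → Prop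
  | [] => True
  | a :: l => l.Pairwise (R a) ∧ Pw3 R l

theorem Pw3.imp {α : Type} {R S : α → α → α → Prop} (h : ∀ a b c, R a b c → S a b c) :
    ∀ l : List α, Pw3 R l → Pw3 S l
  | [], _ => trivial
  | a :: l, ⟨h1, h2⟩ => ⟨h1.imp (fun {b c} => h a b c), Pw3.imp h l h2⟩

theorem srch_sound (kap : ℕ → ℕ) (hleaf : ∀ col : ℕ → ℕ,
      (∀ x ∈ stepLits, col x.1 = kap x.1) → leafCheck col = true) :
    ∀ (L : List (ℕ × ℕ × ℕ × List ℕ)) (s e1 e2 : ℕ) (col : ℕ → ℕ),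
      (∀ x ∈ L, kap x.1 ∈ x.2.2.2) →
      (∀ x ∈ L, Nat.land s (Nat.shiftLeft x.2.1 (kap x.1)) = 0) →
      (∀ x ∈ L, Nat.land e2 (Nat.shiftLeft x.2.2.1 (kap x.1)) = 0) →
      (L.Pairwise fun x y => (e1 &&& (x.2.2.1 <<< (kap x.1))) &&& (y.2.2.1 <<< (kap y.1)) = 0) →
      (L.Pairwise fun x y => (x.2.1 <<< (kap x.1)) &&& (y.2.1 <<< (kap y.1)) = 0) →
      (Pw3 (fun x y z => ((x.2.2.1 <<< (kap x.1)) &&& (y.2.2.1 <<< (kap y.1))) &&&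
        (z.2.2.1 <<< (kap z.1)) = 0) L) →
      (∀ x ∈ stepLits, col x.1 = kap x.1 ∨ x ∈ L) →
      srch L s e1 e2 col = true := by
  intro L
  induction L with
  | nil =>
    intro s e1 e2 col _ _ _ _ _ _ hc
    exact hleaf col (fun x hx => by simpa using hc x hx)
  | cons a r ih =>
    intro s e1 e2 col hv hs he2 he1 hp hp3 hc
    have or_and : ∀ a b c : ℕ, a &&& c = 0 → b &&& c = 0 → (a ||| b) &&& c = 0 := by
      intro a b c h1 h2
      rw [Nat.and_or_distrib_right, h1, h2]; rfl
    rw [srch, List.any_eq_true]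
    refine ⟨kap a.1, hv a (by simp), ?_⟩
    rw [Bool.and_eq_true, Bool.and_eq_true]
    rw [List.pairwise_cons] at he1 hp
    refine ⟨by rw [hs a (by simp)]; rfl, by rw [he2 a (by simp)]; rfl, ?_⟩
    apply ih
    · exact fun x hx => hv x (by simp [hx])
    · intro x hx
      exact or_and _ _ _ (hs x (by simp [hx])) (hp.1 x hx)
    · intro x hx
      exact or_and _ _ _ (he2 x (by simp [hx])) (he1.1 x hx)
    · have h1 := hp3.1
      refine (he1.2.and h1).imp ?_
      rintro x y ⟨h2, h3⟩
      change (e1 ||| (a.2.2.1 <<< kap a.1)) &&& _ &&& _ = 0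
      rw [Nat.and_or_distrib_right]
      exact or_and _ _ _ h2 h3
    · exact hp.2
    · exact hp3.2
    · intro x hx
      by_cases hxa : x.1 = a.1
      · left
        simp [hxa]
      · have : Nat.beq x.1 a.1 = false := by
          cases h : Nat.beq x.1 a.1 with
          | false => rfl
          | true => exact absurd (Nat.eq_of_beq_eq_true h) hxa
        simp only [this, cond_false]
        rcases hc x hx with h | h
        · exact Or.inl h
        · right
          rcases List.mem_cons.1 h with h | h
          · exact absurd (by rw [h]) hxa
          · exact h

/-- Encoding of a list of fields as a bit mask, six bits per field. -/
def enc : List ℕ → ℕ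
  | [] => 0
  | i :: l => (1 <<< (6 * i)) ||| enc l

theorem enc_testBit (l : List ℕ) (k : ℕ) : (enc l).testBit k = true ↔ ∃ i ∈ l, k = 6 * i := by
  induction l with
  | nil => simp [enc]
  | cons i l ih =>
    rw [enc, Nat.testBit_or, Bool.or_eq_true, ih, Nat.one_shiftLeft, Nat.testBit_two_pow]
    simp [eq_comm]

theorem enc_shl (l : List ℕ) (v k : ℕ) :
    (enc l <<< v).testBit k = true ↔ ∃ i ∈ l, k = 6 * i + v := by
  rw [Nat.testBit_shiftLeft, Bool.and_eq_true, enc_testBit]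
  constructor
  · rintro ⟨h, i, hi, h2⟩
    exact ⟨i, hi, by simp at h; omega⟩
  · rintro ⟨i, hi, h2⟩
    exact ⟨by simp; omega, i, hi, by omega⟩

theorem enc_disj (l l' : List ℕ) (v w : ℕ) (hv : v < 6) (hw : w < 6)
    (h : v = w → ∀ i ∈ l, i ∉ l') : (enc l <<< v) &&& (enc l' <<< w) = 0 := by
  apply Nat.eq_of_testBit_eq
  intro k
  rw [Nat.zero_testBit, Nat.testBit_and, Bool.eq_false_iff]
  intro hk
  rw [Bool.and_eq_true, enc_shl, enc_shl] at hk
  obtain ⟨⟨i, hi, h1⟩, ⟨j, hj, h2⟩⟩ := hk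
  have : i = j := by omega
  subst this
  exact h (by omega) i hi hj

theorem enc_disj3 (l l' l'' : List ℕ) (v w u : ℕ) (hv : v < 6) (hw : w < 6) (hu : u < 6)
    (h : v = w → w = u → ∀ i ∈ l, i ∈ l' → i ∉ l'') :
    ((enc l <<< v) &&& (enc l' <<< w)) &&& (enc l'' <<< u) = 0 := by
  apply Nat.eq_of_testBit_eq
  intro k
  rw [Nat.zero_testBit, Nat.testBit_and, Nat.testBit_and, Bool.eq_false_iff]
  intro hk
  rw [Bool.and_eq_true, Bool.and_eq_true, enc_shl, enc_shl, enc_shl] at hk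
  obtain ⟨⟨⟨i, hi, h1⟩, ⟨j, hj, h2⟩⟩, ⟨m, hm, h3⟩⟩ := hk
  have : i = j := by omega
  subst this
  have : i = m := by omega
  subst this
  exact h (by omega) (by omega) i hi hj hm

def convStep (x : List ℕ × List ℕ × List ℕ × List ℕ) : ℕ × ℕ × ℕ × List ℕ :=
  (x.1.headD 0, enc x.2.1, enc x.2.2.1, x.2.2.2)

theorem stepLits_eq : stepLits = stepData.map convStep := by decide +kernel

/-- Number of ones among the seven lowest bits. -/
def pc (m : ℕ) : ℕ := ((List.range 7).filter fun i => m.testBit i).length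

/-- Codes of items: two- or three-element subsets of the seven points. -/
def itm (m : ℕ) : Bool := decide (m < 128) && (pc m == 2 || pc m == 3)

def triplesOff (q : ℕ) : List ℕ :=
  (List.range 128).filter fun x => pc x == 3 && !(x.testBit q)

def meet1 (x y : ℕ) : Bool := pc (x &&& y) == 1

def okLeaf (q x1 x2 x3 x4 : ℕ) : Bool :=
  (paschTable.getD q []).any fun P =>
    [P.1, P.2.1, P.2.2.1, P.2.2.2].all (fun z => z == x1 || z == x2 || z == x3 || z == x4) &&
    (P.1 != P.2.1 && P.1 != P.2.2.1 && P.1 != P.2.2.2 && P.2.1 != P.2.2.1 &&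
      P.2.1 != P.2.2.2 && P.2.2.1 != P.2.2.2)

def complLeaf : Bool :=
  (List.range 7).all fun q => (triplesOff q).all fun x1 =>
    ((triplesOff q).filter (meet1 x1)).all fun x2 =>
    ((triplesOff q).filter (fun x => meet1 x1 x && meet1 x2 x)).all fun x3 =>
    ((triplesOff q).filter (fun x => meet1 x1 x && (meet1 x2 x && meet1 x3 x))).all fun x4 =>
      okLeaf q x1 x2 x3 x4

theorem complLeaf_true : complLeaf = true := by decide +kernel

theorem heads_cover : (List.range 128).all (fun x => !(pc x == 3) ||
    (stepLits.map (fun y => y.1)).contains x) = true := by decide +kernel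

theorem items_valid : stepData.all (fun x => x.1.all itm && itm (x.1.headD 0) &&
    x.1.contains (x.1.headD 0)) = true := by decide +kernel

theorem heads_eq : stepData.all (fun x => x.1.all (fun y => y == x.1.headD 0 ||
    [(3, 5), (9, 17), (33, 65)].contains (x.1.headD 0, y))) = true := by decide +kernel

theorem vals_eq : stepData.all (fun x => x.2.2.2 == [0, 1, 2, 3, 4, 5] ||
    [(3, [0]), (7, [1]), (11, [2]), (19, [3]), (35, [4]), (67, [5])].contains
      (x.1.headD 0, x.2.2.2)) = true := by decide +kernel

def confl (x y : List ℕ × List ℕ × List ℕ × List ℕ) : Bool :=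
  (x.2.1.all fun i => !(y.2.1.contains i)) ||
  (x.1.any fun a => y.1.any fun b => a != b && Nat.ble 2 (pc (a &&& b))) ||
  (x.1.any fun a => x.1.any fun a' => y.1.any fun b => pc a == 2 && pc a' == 2 && pc b == 2 &&
    a != a' && a' != b && a != b && (a &&& a' &&& b) != 0)

theorem confl_all : stepData.Pairwise (fun x y => confl x y = true) := by decide +kernel

def confl3 (x y z : List ℕ × List ℕ × List ℕ × List ℕ) : Bool :=
  (x.2.2.1.all fun i => !(y.2.2.1.contains i && z.2.2.1.contains i)) ||
  (x.1.any fun a => y.1.any fun a' => z.1.any fun b => pc a == 2 && pc a' == 2 && pc b == 2 &&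
    a != a' && a' != b && a != b && (a &&& a' &&& b) != 0)

instance Pw3.dec {α : Type} (R : α → α → α → Prop) [∀ a b c, Decidable (R a b c)] :
    ∀ l : List α, Decidable (Pw3 R l)
  | [] => isTrue trivial
  | _ :: l => @instDecidableAnd _ _ (List.instDecidablePairwise l) (Pw3.dec R l)

theorem confl3_all : Pw3 (fun x y z => confl3 x y z = true) stepData := by decide +kernel

theorem Pw3.map {α β : Type} {R : β → β → β → Prop} (f : α → β) :
    ∀ l : List α, Pw3 (fun a b c => R (f a) (f b) (f c)) l → Pw3 R (l.map f)
  | [], _ => trivial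
  | _ :: l, ⟨h1, h2⟩ => ⟨List.pairwise_map.2 h1, Pw3.map f l h2⟩

theorem Pw3.imp_mem {α : Type} {R S : α → α → α → Prop} :
    ∀ l : List α, (∀ a ∈ l, ∀ b ∈ l, ∀ c ∈ l, R a b c → S a b c) → Pw3 R l → Pw3 S l
  | [], _, _ => trivial
  | a :: l, h, ⟨h1, h2⟩ => ⟨h1.imp_of_mem (fun {b c} hb hc => h a (by simp) b (by simp [hb])
      c (by simp [hc])), Pw3.imp_mem l (fun a ha b hb c hc => h a (by simp [ha]) b (by simp [hb])
      c (by simp [hc])) h2⟩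

theorem no_kap (kap : ℕ → ℕ)
    (hA : ∀ m, itm m = true → kap m < 6)
    (hB : ∀ x y, itm x = true → itm y = true → x ≠ y → 2 ≤ pc (x &&& y) → kap x ≠ kap y)
    (hC : ∀ x y z, itm x = true → itm y = true → itm z = true → pc x = 2 → pc y = 2 → pc z = 2 →
      x ≠ y → y ≠ z → x ≠ z → x &&& y &&& z ≠ 0 → kap x = kap y → kap y ≠ kap z)
    (h3 : kap 3 = 0) (h5 : kap 5 = 0) (h7 : kap 7 = 1) (h11 : kap 11 = 2) (h19 : kap 19 = 3)
    (h35 : kap 35 = 4) (h67 : kap 67 = 5) (h9 : kap 9 = kap 17) (h33 : kap 33 = kap 65)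
    (hR : ∀ q < 7, ∃ x1 ∈ triplesOff q, ∃ x2 ∈ triplesOff q, ∃ x3 ∈ triplesOff q,
      ∃ x4 ∈ triplesOff q, (meet1 x1 x2 = true ∧ meet1 x1 x3 = true ∧ meet1 x1 x4 = true ∧
        meet1 x2 x3 = true ∧ meet1 x2 x4 = true ∧ meet1 x3 x4 = true) ∧
        (kap x1 ≠ kap x2 ∧ kap x1 ≠ kap x3 ∧ kap x1 ≠ kap x4 ∧ kap x2 ≠ kap x3 ∧
          kap x2 ≠ kap x4 ∧ kap x3 ≠ kap x4)) : False := by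
  have hval : ∀ x ∈ stepData, (∀ y ∈ x.1, itm y = true) ∧ itm (x.1.headD 0) = true := by
    intro x hx
    have := List.all_eq_true.1 items_valid x hx
    simp only [Bool.and_eq_true, List.all_eq_true] at this
    exact ⟨this.1.1, this.1.2⟩
  have hhead : ∀ x ∈ stepData, ∀ y ∈ x.1, kap y = kap (x.1.headD 0) := by
    intro x hx y hy
    have := List.all_eq_true.1 (List.all_eq_true.1 heads_eq x hx) y hy
    simp only [Bool.or_eq_true, beq_iff_eq, List.contains_iff_mem, List.mem_cons, Prod.mk.injEq,
      List.not_mem_nil, or_false] at this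
    rcases this with h | ⟨h, h'⟩ | ⟨h, h'⟩ | ⟨h, h'⟩
    · rw [h]
    · rw [h, h', h3, h5]
    · rw [h, h', h9]
    · rw [h, h', h33]
  have hleaf : ∀ col : ℕ → ℕ,
      (∀ x ∈ stepLits, col x.1 = kap x.1) → leafCheck col = true := by
    intro col hcol
    have hcol' : ∀ q, ∀ x ∈ triplesOff q, col x = kap x := by
      intro q x hx
      simp only [triplesOff, List.mem_filter, Bool.and_eq_true] at hx
      have := List.all_eq_true.1 heads_cover x hx.1
      simp only [hx.2.1, Bool.not_true, Bool.false_or, List.contains_iff_mem, List.mem_map] at this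
      obtain ⟨y, hy, rfl⟩ := this
      exact hcol y hy
    have hlen : paschTable.length = 7 := by decide +kernel
    rw [leafCheck, List.all_eq_true]
    intro l hl
    obtain ⟨q, hq, rfl⟩ := List.mem_iff_getElem.1 hl
    obtain ⟨x1, k1, x2, k2, x3, k3, x4, k4, ⟨m12, m13, m14, m23, m24, m34⟩,
      n12, n13, n14, n23, n24, n34⟩ := hR q (by omega)
    have hc := complLeaf_true
    simp only [complLeaf, List.all_eq_true] at hc
    have hc1 := hc q (by simp; omega) x1 k1 x2 (List.mem_filter.2 ⟨k2, m12⟩)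
      x3 (List.mem_filter.2 ⟨k3, by simp [m13, m23]⟩)
      x4 (List.mem_filter.2 ⟨k4, by simp [m14, m24, m34]⟩)
    rw [okLeaf, List.any_eq_true] at hc1
    obtain ⟨P, hP, hP2⟩ := hc1
    have hP' : P ∈ paschTable[q] := by
      simpa [List.getD_eq_getElem?_getD, hq] using hP
    refine List.any_eq_true.2 ⟨P, hP', ?_⟩
    rw [← hcol' q _ k1, ← hcol' q _ k2] at n12
    rw [← hcol' q _ k1, ← hcol' q _ k3] at n13
    rw [← hcol' q _ k1, ← hcol' q _ k4] at n14
    rw [← hcol' q _ k2, ← hcol' q _ k3] at n23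
    rw [← hcol' q _ k2, ← hcol' q _ k4] at n24
    rw [← hcol' q _ k3, ← hcol' q _ k4] at n34
    have inj : ∀ a b, (a = x1 ∨ a = x2 ∨ a = x3 ∨ a = x4) → (b = x1 ∨ b = x2 ∨ b = x3 ∨ b = x4) →
        a ≠ b → Nat.beq (col a) (col b) = false := by
      intro a b ha hb hab
      rw [Bool.eq_false_iff]
      intro h
      replace h := Nat.eq_of_beq_eq_true h
      rcases ha with rfl | rfl | rfl | rfl <;> rcases hb with rfl | rfl | rfl | rfl <;>
        first
          | exact hab rfl
          | exact n12 h
          | exact n13 h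
          | exact n14 h
          | exact n23 h
          | exact n24 h
          | exact n34 h
          | exact n12 h.symm
          | exact n13 h.symm
          | exact n14 h.symm
          | exact n23 h.symm
          | exact n24 h.symm
          | exact n34 h.symm
    simp only [List.all_cons, List.all_nil, Bool.and_true, Bool.and_eq_true, Bool.or_eq_true,
      beq_iff_eq, bne_iff_ne, or_assoc] at hP2
    obtain ⟨⟨a1, a2, a3, a4⟩, ⟨⟨⟨⟨b1, b2⟩, b3⟩, b4⟩, b5⟩, b6⟩ := hP2
    rw [inj _ _ a1 a2 b1, inj _ _ a1 a3 b2, inj _ _ a1 a4 b3, inj _ _ a2 a3 b4,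
      inj _ _ a2 a4 b5, inj _ _ a3 a4 b6]
    rfl
  have hlt : ∀ x ∈ stepData, kap (x.1.headD 0) < 6 := fun x hx => hA _ (hval x hx).2
  have key := srch_sound kap hleaf stepLits 0 0 0 (fun _ => 0) ?_ ?_ ?_ ?_ ?_ ?_ ?_
  · rw [srch_false] at key
    cases key
  · rw [stepLits_eq]
    intro x hx
    obtain ⟨y, hy, rfl⟩ := List.mem_map.1 hx
    have := List.all_eq_true.1 vals_eq y hy
    have hl := hlt y hy
    simp only [Bool.or_eq_true, beq_iff_eq, List.contains_iff_mem, List.mem_cons, Prod.mk.injEq,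
      List.not_mem_nil, or_false] at this
    simp only [convStep]
    rcases this with h | ⟨h, h'⟩ | ⟨h, h'⟩ | ⟨h, h'⟩ | ⟨h, h'⟩ | ⟨h, h'⟩ | ⟨h, h'⟩
    · rw [h]
      simp only [List.mem_cons, List.not_mem_nil, or_false]
      omega
    all_goals rw [h, h']; simp only [List.mem_cons, List.not_mem_nil, or_false]; assumption
  · intro x _
    exact Nat.zero_and _
  · intro x _
    exact Nat.zero_and _
  · refine List.pairwise_of_forall_mem_list ?_
    intro x _ y _
    simp
  · rw [stepLits_eq, List.pairwise_map]
    refine confl_all.imp_of_mem ?_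
    intro x y hx hy h
    refine enc_disj _ _ _ _ (hlt x hx) (hlt y hy) ?_
    intro hk
    have hxy : ∀ a ∈ x.1, ∀ b ∈ y.1, kap a = kap b := fun a ha b hb => by
      rw [hhead x hx a ha, hhead y hy b hb]; exact hk
    have hxx : ∀ a ∈ x.1, ∀ b ∈ x.1, kap a = kap b := fun a ha b hb => by
      rw [hhead x hx a ha, hhead x hx b hb]
    simp only [confl, Bool.or_eq_true, List.any_eq_true, List.all_eq_true, Bool.and_eq_true,
      bne_iff_ne, beq_iff_eq, Bool.not_eq_true', List.contains_eq_mem, decide_eq_false_iff_not,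
      Nat.ble_eq] at h
    rcases h with (h | ⟨a, ha, b, hb, h1, h2⟩) | ⟨a, ha, a', ha', b, hb, h⟩
    · exact h
    · exact absurd (hxy a ha b hb) (hB a b ((hval x hx).1 a ha) ((hval y hy).1 b hb) h1 h2)
    · obtain ⟨⟨⟨⟨⟨⟨p1, p2⟩, p3⟩, p4⟩, p5⟩, p6⟩, p7⟩ := h
      exact absurd (hxy a' ha' b hb) (hC a a' b ((hval x hx).1 a ha) ((hval x hx).1 a' ha')
        ((hval y hy).1 b hb) p1 p2 p3 p4 p5 p6 p7 (hxx a ha a' ha'))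
  · rw [stepLits_eq]
    refine Pw3.map _ _ ?_
    refine Pw3.imp_mem _ ?_ confl3_all
    intro x hx y hy z hz h
    refine enc_disj3 _ _ _ _ _ _ (hlt x hx) (hlt y hy) (hlt z hz) ?_
    intro hk hk2
    have hxy : ∀ a ∈ x.1, ∀ b ∈ y.1, kap a = kap b := fun a ha b hb => by
      rw [hhead x hx a ha, hhead y hy b hb]; exact hk
    have hyz : ∀ a ∈ y.1, ∀ b ∈ z.1, kap a = kap b := fun a ha b hb => by
      rw [hhead y hy a ha, hhead z hz b hb]; exact hk2
    simp only [confl3, Bool.or_eq_true, List.any_eq_true, List.all_eq_true, Bool.and_eq_true,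
      bne_iff_ne, beq_iff_eq, Bool.not_eq_true', List.contains_eq_mem, Bool.and_eq_false_iff,
      decide_eq_false_iff_not] at h
    rcases h with h | ⟨a, ha, a', ha', b, hb, h⟩
    · intro i hi hi2
      rcases h i hi with h | h
      · exact absurd hi2 h
      · exact h
    · obtain ⟨⟨⟨⟨⟨⟨p1, p2⟩, p3⟩, p4⟩, p5⟩, p6⟩, p7⟩ := h
      exact absurd (hyz a' ha' b hb) (hC a a' b ((hval x hx).1 a ha) ((hval y hy).1 a' ha')
        ((hval z hz).1 b hb) p1 p2 p3 p4 p5 p6 p7 (hxy a ha a' ha'))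
  · intro x hx
    exact Or.inr hx


/-- Coordinates in which `d` agrees with `w`. -/
def agr (w d : Fin 8 → Fin 7) : Finset (Fin 8) := Finset.univ.filter fun i => d i = w i

theorem mem_agr (w d : Fin 8 → Fin 7) (i : Fin 8) : i ∈ agr w d ↔ d i = w i := by
  simp [agr]

/-- A code of strength three in which distinct words agree in at most two places, together
with a word agreeing with every codeword in at most three places. -/
structure Cfg (D : Set (Fin 8 → Fin 7)) (w : Fin 8 → Fin 7) : Prop where
  ex : ∀ S : Finset (Fin 8), S.card = 3 → ∀ g : Fin 8 → Fin 7, ∃ d ∈ D, ∀ i ∈ S, d i = g i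
  uq : ∀ d ∈ D, ∀ d' ∈ D, ∀ S : Finset (Fin 8), 3 ≤ S.card → (∀ i ∈ S, d i = d' i) → d = d'
  le : ∀ d ∈ D, (agr w d).card ≤ 3

theorem Cfg.exact3 {D : Set (Fin 8 → Fin 7)} {w : Fin 8 → Fin 7} (h : Cfg D w)
    (x : Finset (Fin 8)) (hx : x.card = 3) : ∃ d ∈ D, agr w d = x := by
  obtain ⟨d, hd, h1⟩ := h.ex x hx w
  refine ⟨d, hd, (Finset.eq_of_subset_of_card_le ?_ ?_).symm⟩
  · intro i hi
    exact (mem_agr w d i).2 (h1 i hi)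
  · rw [hx]; exact h.le d hd

theorem exists_notMem_lt (x : Finset (Fin 8)) (hx : x.card < 8) : ∃ p, p ∉ x := by
  by_contra hc
  push Not at hc
  have : Finset.univ ⊆ x := fun i _ => hc i
  have := Finset.card_le_card this
  simp at this
  omega

theorem Cfg.exact2 {D : Set (Fin 8 → Fin 7)} {w : Fin 8 → Fin 7} (h : Cfg D w)
    (x : Finset (Fin 8)) (hx : x.card = 2) : ∃ d ∈ D, agr w d = x := by
  obtain ⟨p, hp⟩ := exists_notMem_lt x (by omega)
  have hT : ∀ k, ∃ d, k ∉ x → d ∈ D ∧ agr w d = insert k x := by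
    intro k
    by_cases hk : k ∈ x
    · exact ⟨w, fun h => absurd hk h⟩
    · obtain ⟨d, hd, h1⟩ := h.exact3 (insert k x) (by rw [Finset.card_insert_of_notMem hk, hx])
      exact ⟨d, fun _ => ⟨hd, h1⟩⟩
  choose T hT using hT
  have hv : ∃ v : Fin 7, v ∉ (Finset.univ \ x).image (fun k => T k p) := by
    by_contra hc
    push Not at hc
    have h1 : Finset.univ ⊆ (Finset.univ \ x).image (fun k => T k p) := fun i _ => hc i
    have h2 := (Finset.card_le_card h1).trans Finset.card_image_le
    rw [Finset.card_sdiff_of_subset (Finset.subset_univ x), hx] at h2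
    simp at h2
  obtain ⟨v, hv⟩ := hv
  have hv' : ∀ k, k ∉ x → T k p ≠ v := by
    intro k hk he
    exact hv (Finset.mem_image.2 ⟨k, by simp [hk], he⟩)
  have hp3 : (insert p x).card = 3 := by rw [Finset.card_insert_of_notMem hp, hx]
  obtain ⟨d, hd, h1⟩ := h.ex (insert p x) hp3 (fun i => if i = p then v else w i)
  have hdp : d p = v := by simpa using h1 p (by simp)
  have hdx : ∀ i ∈ x, d i = w i := by
    intro i hi
    have := h1 i (by simp [hi])
    rwa [if_neg (by rintro rfl; exact hp hi)] at this
  refine ⟨d, hd, ?_⟩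
  ext k
  rw [mem_agr]
  constructor
  · intro hk
    by_contra hkx
    have h2 := hT k hkx
    have : d = T k := by
      refine h.uq d hd _ h2.1 (insert k x) (by rw [Finset.card_insert_of_notMem hkx, hx]) ?_
      intro i hi
      have h3 : T k i = w i := by rw [← mem_agr, h2.2]; exact hi
      rw [h3]
      rcases Finset.mem_insert.1 hi with rfl | hi
      · exact hk
      · exact hdx i hi
    exact hv' k hkx (by rw [← this, hdp])
  · exact hdx k

theorem Cfg.uniq2 {D : Set (Fin 8 → Fin 7)} {w : Fin 8 → Fin 7} (h : Cfg D w)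
    (x : Finset (Fin 8)) (hx : x.card = 2) (d d' : Fin 8 → Fin 7) (hd : d ∈ D) (hd' : d' ∈ D)
    (h1 : agr w d = x) (h1' : agr w d' = x) : d = d' := by
  by_contra hne
  obtain ⟨p, hp⟩ := exists_notMem_lt x (by omega)
  have hT : ∀ k, ∃ d, k ∉ x → d ∈ D ∧ agr w d = insert k x := by
    intro k
    by_cases hk : k ∈ x
    · exact ⟨w, fun h => absurd hk h⟩
    · obtain ⟨d, hd, h1⟩ := h.exact3 (insert k x) (by rw [Finset.card_insert_of_notMem hk, hx])
      exact ⟨d, fun _ => ⟨hd, h1⟩⟩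
  choose T hT using hT
  obtain ⟨a, b, hab, rfl⟩ := Finset.card_eq_two.1 hx
  have hU : ∃ U : Fin 8 → Fin 8 → Fin 7, U a = d ∧ U b = d' ∧
      ∀ k, k ∉ ({a, b} : Finset (Fin 8)) → U k = T k := by
    refine ⟨fun k => if k = a then d else if k = b then d' else T k, by simp, ?_, ?_⟩
    · simp [hab.symm]
    · intro k hk
      simp only [Finset.mem_insert, Finset.mem_singleton, not_or] at hk
      simp [hk]
  obtain ⟨U, hUa, hUb, hUk⟩ := hU
  have hcases : ∀ k, k = a ∨ k = b ∨ k ∉ ({a, b} : Finset (Fin 8)) := by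
    intro k; simp; tauto
  have hmem : ∀ k, U k ∈ D := by
    intro k
    rcases hcases k with rfl | rfl | hk
    · rw [hUa]; exact hd
    · rw [hUb]; exact hd'
    · rw [hUk k hk]; exact (hT k hk).1
  have hsub : ∀ k, ({a, b} : Finset (Fin 8)) ⊆ agr w (U k) := by
    intro k
    rcases hcases k with rfl | rfl | hk
    · rw [hUa, h1]
    · rw [hUb, h1']
    · rw [hUk k hk, (hT k hk).2]; exact Finset.subset_insert _ _
  have hinj : Function.Injective U := by
    have hk0 : ∀ k, k ∉ ({a, b} : Finset (Fin 8)) → k ∈ agr w (U k) := by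
      intro k hk
      rw [hUk k hk, (hT k hk).2]; simp
    intro k k' he
    rcases hcases k with rfl | rfl | hk <;> rcases hcases k' with rfl | rfl | hk'
    · rfl
    · exact absurd (by rw [← hUa, ← hUb, he]) hne
    · exfalso
      have := hk0 _ hk'
      rw [← he, hUa, h1] at this
      exact hk' this
    · exact absurd (by rw [← hUa, ← hUb, he]) hne
    · rfl
    · exfalso
      have := hk0 _ hk'
      rw [← he, hUb, h1'] at this
      exact hk' this
    · exfalso
      have := hk0 _ hk
      rw [he, hUa, h1] at this
      exact hk this
    · exfalso
      have := hk0 _ hk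
      rw [he, hUb, h1'] at this
      exact hk this
    · have := hk0 _ hk
      rw [he, hUk k' hk', (hT k' hk').2, Finset.mem_insert] at this
      exact this.resolve_right hk
  have hf : Function.Injective fun k => U k p := by
    intro k k' he
    apply hinj
    refine h.uq _ (hmem k) _ (hmem k') (insert p {a, b})
      (by rw [Finset.card_insert_of_notMem hp, hx]) ?_
    intro i hi
    rcases Finset.mem_insert.1 hi with rfl | hi
    · exact he
    · rw [(mem_agr _ _ _).1 (hsub k hi), (mem_agr _ _ _).1 (hsub k' hi)]
  have := Fintype.card_le_of_injective _ hf
  simp at this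

/-- A configuration with a choice of a word for every item. -/
structure CfgW (D : Set (Fin 8 → Fin 7)) (w : Fin 8 → Fin 7)
    (W : Finset (Fin 8) → Fin 8 → Fin 7) : Prop extends Cfg D w where
  mem : ∀ x : Finset (Fin 8), x.card = 2 ∨ x.card = 3 → W x ∈ D
  ag : ∀ x : Finset (Fin 8), x.card = 2 ∨ x.card = 3 → ∀ i, W x i = w i ↔ i ∈ x

theorem Cfg.exW {D : Set (Fin 8 → Fin 7)} {w : Fin 8 → Fin 7} (h : Cfg D w) :
    ∃ W, CfgW D w W := by
  have : ∀ x : Finset (Fin 8), ∃ d, x.card = 2 ∨ x.card = 3 → d ∈ D ∧ agr w d = x := by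
    intro x
    by_cases hx : x.card = 2 ∨ x.card = 3
    · rcases hx with hx | hx
      · obtain ⟨d, h1, h2⟩ := h.exact2 x hx
        exact ⟨d, fun _ => ⟨h1, h2⟩⟩
      · obtain ⟨d, h1, h2⟩ := h.exact3 x hx
        exact ⟨d, fun _ => ⟨h1, h2⟩⟩
    · exact ⟨w, fun h => absurd h hx⟩
  choose W hW using this
  exact ⟨W, h, fun x hx => (hW x hx).1, fun x hx i => by rw [← mem_agr, (hW x hx).2]⟩

theorem CfgW.eq_of {D : Set (Fin 8 → Fin 7)} {w : Fin 8 → Fin 7}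
    {W : Finset (Fin 8) → Fin 8 → Fin 7} (h : CfgW D w W) (x y T : Finset (Fin 8))
    (hx : x.card = 2 ∨ x.card = 3) (hy : y.card = 2 ∨ y.card = 3)
    (hT : ∀ t ∈ T, t ∉ x ∧ W x t = W y t) (hc : 3 ≤ (x ∩ y).card + T.card) : x = y := by
  have he : W x = W y := by
    refine h.uq _ (h.mem x hx) _ (h.mem y hy) ((x ∩ y) ∪ T) ?_ ?_
    · rw [Finset.card_union_of_disjoint]
      · exact hc
      · rw [Finset.disjoint_right]
        intro t ht
        simp [(hT t ht).1]
    · intro i hi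
      rcases Finset.mem_union.1 hi with hi | hi
      · rw [Finset.mem_inter] at hi
        rw [(h.ag x hx i).2 hi.1, (h.ag y hy i).2 hi.2]
      · exact (hT i hi).2
  ext i
  rw [← h.ag x hx, ← h.ag y hy, he]

theorem CfgW.partner {D : Set (Fin 8 → Fin 7)} {w : Fin 8 → Fin 7}
    {W : Finset (Fin 8) → Fin 8 → Fin 7} (h : CfgW D w W) (i j p : Fin 8) (hij : i ≠ j)
    (hip : i ≠ p) (hjp : j ≠ p) :
    ∃ k, k ≠ i ∧ k ≠ j ∧ k ≠ p ∧ W {i, k} p = W {i, j} p := by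
  by_contra hno
  push Not at hno
  have hijc : ({i, j} : Finset (Fin 8)).card = 2 := Finset.card_pair hij
  have hbp : W {i, j} p ≠ w p := by
    intro he
    have := (h.ag {i, j} (Or.inl hijc) p).1 he
    simp only [Finset.mem_insert, Finset.mem_singleton] at this
    rcases this with h | h
    · exact hip h.symm
    · exact hjp h.symm
  set b := W {i, j} p with hb
  have hX : ∀ k, ∃ d, (k ≠ i ∧ k ≠ p) → d ∈ D ∧ d i = w i ∧ d k = w k ∧ d p = b := by
    intro k
    by_cases hk : k ≠ i ∧ k ≠ p
    · obtain ⟨d, hd, h1⟩ := h.ex {i, k, p} (Finset.card_eq_three.2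
        ⟨i, k, p, hk.1.symm, hip, hk.2, rfl⟩) (fun t => if t = p then b else w t)
      refine ⟨d, fun _ => ⟨hd, ?_, ?_, ?_⟩⟩
      · simpa [hip] using h1 i (by simp)
      · simpa [hk.2] using h1 k (by simp)
      · simpa using h1 p (by simp)
    · exact ⟨w, fun h => absurd h hk⟩
  choose X hX using hX
  have huq : ∀ d ∈ D, ∀ d' ∈ D, ∀ k, k ≠ i → k ≠ p → d i = w i → d' i = w i → d k = w k →
      d' k = w k → d p = b → d' p = b → d = d' := by
    intro d hd d' hd' k hki hkp a1 a2 a3 a4 a5 a6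
    refine h.uq d hd d' hd' {i, k, p} (Finset.card_eq_three.2
        ⟨i, k, p, hki.symm, hip, hkp, rfl⟩).ge ?_
    intro t ht
    simp only [Finset.mem_insert, Finset.mem_singleton] at ht
    rcases ht with rfl | rfl | rfl
    · rw [a1, a2]
    · rw [a3, a4]
    · rw [a5, a6]
  have hσ : ∀ k, ∃ k', (k ≠ i ∧ k ≠ j ∧ k ≠ p) →
      (k' ≠ i ∧ k' ≠ j ∧ k' ≠ p) ∧ k' ≠ k ∧ agr w (X k) = {i, k, k'} := by
    intro k
    by_cases hk : k ≠ i ∧ k ≠ j ∧ k ≠ p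
    swap
    · exact ⟨k, fun h => absurd h hk⟩
    obtain ⟨hd, xi, xk, xp⟩ := hX k ⟨hk.1, hk.2.2⟩
    have hxj : X k j ≠ w j := by
      intro he
      have e1 := huq _ hd _ (h.mem _ (Or.inl hijc)) j hij.symm hjp xi
        ((h.ag _ (Or.inl hijc) i).2 (by simp)) he ((h.ag _ (Or.inl hijc) j).2 (by simp)) xp hb.symm
      rw [e1, h.ag _ (Or.inl hijc)] at xk
      simp only [Finset.mem_insert, Finset.mem_singleton] at xk
      tauto
    have hpair : ({i, k} : Finset (Fin 8)).card = 2 := Finset.card_pair hk.1.symm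
    have hsub : ({i, k} : Finset (Fin 8)) ⊆ agr w (X k) := by
      intro t ht
      simp only [Finset.mem_insert, Finset.mem_singleton] at ht
      rcases ht with rfl | rfl
      · exact (mem_agr _ _ _).2 xi
      · exact (mem_agr _ _ _).2 xk
    have hne : agr w (X k) ≠ {i, k} := by
      intro he
      have : X k = W {i, k} := by
        refine h.uniq2 {i, k} hpair _ _ hd (h.mem _ (Or.inl hpair)) he ?_
        ext t
        rw [mem_agr, h.ag _ (Or.inl hpair)]
      exact hno k hk.1 hk.2.1 hk.2.2 (by rw [← this, xp])
    have hss : ({i, k} : Finset (Fin 8)) ⊂ agr w (X k) :=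
      hsub.ssubset_of_ne hne.symm
    obtain ⟨k', hk', hk'2⟩ := Finset.exists_of_ssubset hss
    simp only [Finset.mem_insert, Finset.mem_singleton, not_or] at hk'2
    have hc3 : ({i, k, k'} : Finset (Fin 8)).card = 3 :=
      Finset.card_eq_three.2 ⟨i, k, k', hk.1.symm, Ne.symm hk'2.1, Ne.symm hk'2.2, rfl⟩
    refine ⟨k', fun _ => ⟨⟨hk'2.1, ?_, ?_⟩, hk'2.2, ?_⟩⟩
    · rintro rfl
      exact hxj ((mem_agr _ _ _).1 hk')
    · rintro rfl
      rw [mem_agr, xp] at hk'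
      exact hbp hk'
    · refine (Finset.eq_of_subset_of_card_le ?_ ?_).symm
      · intro t ht
        simp only [Finset.mem_insert, Finset.mem_singleton] at ht
        rcases ht with rfl | rfl | rfl
        · exact (mem_agr _ _ _).2 xi
        · exact (mem_agr _ _ _).2 xk
        · exact hk'
      · rw [hc3]; exact h.le _ hd
  choose σ hσ using hσ
  have hinv : ∀ k, (k ≠ i ∧ k ≠ j ∧ k ≠ p) → σ (σ k) = k := by
    intro k hk
    obtain ⟨hk', hne, hag⟩ := hσ k hk
    obtain ⟨hk'', hne', hag'⟩ := hσ (σ k) hk'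
    obtain ⟨hd, xi, xk, xp⟩ := hX k ⟨hk.1, hk.2.2⟩
    obtain ⟨hd', xi', xk', xp'⟩ := hX (σ k) ⟨hk'.1, hk'.2.2⟩
    have he := huq _ hd _ hd' (σ k) hk'.1 hk'.2.2 xi xi'
      ((mem_agr _ _ _).1 (by rw [hag]; simp)) xk' xp xp'
    have : k ∈ agr w (X (σ k)) := by rw [← he, hag]; simp
    rw [hag'] at this
    simp only [Finset.mem_insert, Finset.mem_singleton] at this
    rcases this with h | h | h
    · exact absurd h hk.1
    · exact absurd h.symm hne
    · exact h.symm
  have hQ : ∀ k, k ∈ Finset.univ \ ({i, j, p} : Finset (Fin 8)) ↔ (k ≠ i ∧ k ≠ j ∧ k ≠ p) := by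
    intro k; simp
  have hsum : ∑ k ∈ Finset.univ \ ({i, j, p} : Finset (Fin 8)), (1 : ZMod 2) = 0 := by
    refine Finset.sum_involution (fun k _ => σ k) ?_ ?_ ?_ ?_
    · intro k _; decide
    · intro k hk _
      exact (hσ k ((hQ k).1 hk)).2.1
    · intro k hk
      exact (hQ _).2 (hσ k ((hQ k).1 hk)).1
    · intro k hk
      exact hinv k ((hQ k).1 hk)
  rw [Finset.sum_const, Finset.card_sdiff_of_subset (Finset.subset_univ _),
    Finset.card_eq_three.2 ⟨i, j, p, hij, hip, hjp, rfl⟩] at hsum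
  simp only [Finset.card_univ, Fintype.card_fin] at hsum
  revert hsum
  decide

theorem CfgW.deg {D : Set (Fin 8 → Fin 7)} {w : Fin 8 → Fin 7}
    {W : Finset (Fin 8) → Fin 8 → Fin 7} (h : CfgW D w W) (i j k l p : Fin 8) (hij : i ≠ j)
    (hip : i ≠ p) (hjp : j ≠ p) (hki : k ≠ i) (hkj : k ≠ j) (hkp : k ≠ p)
    (hli : l ≠ i) (hlj : l ≠ j) (hlp : l ≠ p) (hk : W {i, k} p = W {i, j} p)
    (hl : W {i, l} p = W {i, j} p) : k = l := by
  have key : ∀ k p p', k ≠ i → k ≠ j → k ≠ p → k ≠ p' → i ≠ p → i ≠ p' → p ≠ p' →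
      W {i, k} p = W {i, j} p → W {i, k} p' = W {i, j} p' → False := by
    intro k p p' a1 a2 a3 a4 a5 a6 a7 e1 e2
    have := h.eq_of {i, k} {i, j} {p, p'} (Or.inl (Finset.card_pair a1.symm))
      (Or.inl (Finset.card_pair hij)) ?_ ?_
    · have hkk : k ∈ ({i, k} : Finset (Fin 8)) := by simp
      rw [this] at hkk
      simp only [Finset.mem_insert, Finset.mem_singleton] at hkk
      tauto
    · intro t ht
      simp only [Finset.mem_insert, Finset.mem_singleton] at ht ⊢
      rcases ht with rfl | rfl
      · exact ⟨by rintro (h | h); exacts [a5 h.symm, a3 h.symm], e1⟩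
      · exact ⟨by rintro (h | h); exacts [a6 h.symm, a4 h.symm], e2⟩
    · rw [Finset.card_pair a7]
      have : 0 < (({i, k} : Finset (Fin 8)) ∩ {i, j}).card := Finset.card_pos.2 ⟨i, by simp⟩
      omega
  have hπ : ∀ p : {p : Fin 8 // p ≠ i ∧ p ≠ j}, ∃ k : {p : Fin 8 // p ≠ i ∧ p ≠ j},
      k.1 ≠ p.1 ∧ W {i, k.1} p = W {i, j} p := by
    intro p
    obtain ⟨k, h1, h2, h3, h4⟩ := h.partner i j p hij p.2.1.symm p.2.2.symm
    exact ⟨⟨k, h1, h2⟩, h3, h4⟩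
  choose π hπ using hπ
  have hinj : Function.Injective π := by
    intro a b hab
    by_contra hne
    refine key (π a).1 a.1 b.1 (π a).2.1 (π a).2.2 (hπ a).1 (by rw [hab]; exact (hπ b).1)
      a.2.1.symm b.2.1.symm (fun h => hne (Subtype.ext h)) (hπ a).2 ?_
    rw [hab]; exact (hπ b).2
  have hsur := Finite.injective_iff_surjective.1 hinj
  have hall : ∀ k, k ≠ i → k ≠ j → k ≠ p → W {i, k} p = W {i, j} p →
      k = (π ⟨p, hip.symm, hjp.symm⟩).1 := by
    intro k a1 a2 a3 e
    obtain ⟨p', hp'⟩ := hsur ⟨k, a1, a2⟩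
    have hk : (π p').1 = k := by rw [hp']
    by_cases hpp : p'.1 = p
    · have : p' = ⟨p, hip.symm, hjp.symm⟩ := Subtype.ext hpp
      rw [← this, hk]
    · exfalso
      refine key k p p'.1 a1 a2 a3 ?_ hip p'.2.1.symm (Ne.symm hpp) e ?_
      · rw [← hk]; exact (hπ p').1
      · have := (hπ p').2
        rwa [hk] at this
  rw [hall k hki hkj hkp hk, hall l hli hlj hlp hl]

theorem CfgW.deg' {D : Set (Fin 8 → Fin 7)} {w : Fin 8 → Fin 7}
    {W : Finset (Fin 8) → Fin 8 → Fin 7} (h : CfgW D w W) (i p : Fin 8) (x y z : Finset (Fin 8))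
    (hx : x.card = 2) (hy : y.card = 2) (hz : z.card = 2) (ix : i ∈ x) (iy : i ∈ y) (iz : i ∈ z)
    (px : p ∉ x) (py : p ∉ y) (pz : p ∉ z) (hxy : x ≠ y) (hyz : y ≠ z) (hxz : x ≠ z)
    (e : W x p = W y p) : W y p ≠ W z p := by
  have hpair : ∀ x : Finset (Fin 8), x.card = 2 → i ∈ x → ∃ j, j ≠ i ∧ x = {i, j} := by
    intro x hx ix
    obtain ⟨a, b, hab, rfl⟩ := Finset.card_eq_two.1 hx
    simp only [Finset.mem_insert, Finset.mem_singleton] at ix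
    rcases ix with rfl | rfl
    · exact ⟨b, hab.symm, rfl⟩
    · exact ⟨a, hab, Finset.pair_comm _ _⟩
  obtain ⟨a, ha, rfl⟩ := hpair x hx ix
  obtain ⟨b, hb, rfl⟩ := hpair y hy iy
  obtain ⟨c, hc, rfl⟩ := hpair z hz iz
  simp only [Finset.mem_insert, Finset.mem_singleton, not_or] at px py pz
  intro e2
  have := h.deg i b a c p hb.symm (Ne.symm px.1) (Ne.symm py.2) ha
    (by rintro rfl; exact hxy rfl) (Ne.symm px.2) hc (by rintro rfl; exact hyz rfl)
    (Ne.symm pz.2) e e2.symm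
  exact hxz (by rw [this])

theorem CfgW.pasch {D : Set (Fin 8 → Fin 7)} {w : Fin 8 → Fin 7}
    {W : Finset (Fin 8) → Fin 8 → Fin 7} (h : CfgW D w W) (p q : Fin 8) (hpq : p ≠ q) :
    ∃ f : Fin 4 → Finset (Fin 8), (∀ a, (f a).card = 3 ∧ p ∉ f a ∧ q ∉ f a) ∧
      ∀ a b, a ≠ b → (f a ∩ f b).card = 1 ∧ W (f a) p ≠ W (f b) p := by
  have hU : (Finset.univ \ ({p, q} : Finset (Fin 8))).card = 6 := by
    rw [Finset.card_sdiff_of_subset (Finset.subset_univ _), Finset.card_pair hpq]; rfl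
  set U := Finset.univ \ ({p, q} : Finset (Fin 8)) with hUdef
  have hT : ∀ x ∈ Finset.powersetCard 3 U, x.card = 3 ∧ p ∉ x ∧ q ∉ x := by
    intro x hx
    rw [Finset.mem_powersetCard] at hx
    refine ⟨hx.2, fun hp => ?_, fun hq => ?_⟩
    · have := hx.1 hp; simp [hUdef] at this
    · have := hx.1 hq; simp [hUdef] at this
  obtain ⟨v, hv, hfib⟩ := Finset.exists_lt_card_fiber_of_mul_lt_card_of_maps_to
    (s := Finset.powersetCard 3 U) (t := Finset.univ.erase (w q)) (f := fun x => W x q) (n := 3)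
    (by
      intro x hx
      obtain ⟨h1, h2, h3⟩ := hT x hx
      simp only [Finset.mem_erase, Finset.mem_univ, and_true]
      rw [ne_eq, h.ag x (Or.inr h1)]
      exact h3)
    (by
      rw [Finset.card_powersetCard, hU, Finset.card_erase_of_mem (Finset.mem_univ _)]
      decide)
  set F := (Finset.powersetCard 3 U).filter (fun x => W x q = v) with hF
  have hF1 : ∀ x ∈ F, (x.card = 3 ∧ p ∉ x ∧ q ∉ x) ∧ x ⊆ U ∧ W x q = v := by
    intro x hx
    rw [hF, Finset.mem_filter] at hx
    exact ⟨hT x hx.1, (Finset.mem_powersetCard.1 hx.1).1, hx.2⟩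
  have hle : ∀ x ∈ F, ∀ y ∈ F, x ≠ y → (x ∩ y).card ≤ 1 := by
    intro x hx y hy hxy
    by_contra hc
    obtain ⟨⟨x1, x2, x3⟩, x4, x5⟩ := hF1 x hx
    obtain ⟨⟨y1, y2, y3⟩, y4, y5⟩ := hF1 y hy
    refine hxy (h.eq_of x y {q} (Or.inr x1) (Or.inr y1) ?_ ?_)
    · intro t ht
      rw [Finset.mem_singleton] at ht
      subst ht
      exact ⟨x3, by rw [x5, y5]⟩
    · rw [Finset.card_singleton]; omega
  have h1 : ∀ x ∈ F, ∀ y ∈ F, x ≠ y → (x ∩ y).card = 1 := by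
    intro x hx y hy hxy
    have hl := hle x hx y hy hxy
    by_contra hc
    have h0 : (x ∩ y).card = 0 := by omega
    have hd : Disjoint x y := by
      rw [Finset.disjoint_iff_inter_eq_empty]
      exact Finset.card_eq_zero.1 h0
    obtain ⟨⟨x1, x2, x3⟩, x4, x5⟩ := hF1 x hx
    obtain ⟨⟨y1, y2, y3⟩, y4, y5⟩ := hF1 y hy
    have hun : x ∪ y = U := by
      refine Finset.eq_of_subset_of_card_le (Finset.union_subset x4 y4) ?_
      rw [Finset.card_union_of_disjoint hd]; omega
    have hz : ∃ z ∈ F, z ∉ ({x, y} : Finset (Finset (Fin 8))) := by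
      apply Finset.exists_mem_notMem_of_card_lt_card
      have : ({x, y} : Finset (Finset (Fin 8))).card ≤ 2 := Finset.card_le_two
      omega
    obtain ⟨z, hz, hz2⟩ := hz
    simp only [Finset.mem_insert, Finset.mem_singleton, not_or] at hz2
    obtain ⟨⟨z1, z2, z3⟩, z4, z5⟩ := hF1 z hz
    have hzx := hle z hz x hx hz2.1
    have hzy := hle z hz y hy hz2.2
    have : z = (z ∩ x) ∪ (z ∩ y) := by
      rw [← Finset.inter_union_distrib_left, hun, Finset.inter_eq_left.2 z4]
    have h2 := Finset.card_union_le (z ∩ x) (z ∩ y)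
    rw [← this] at h2
    omega
  refine ⟨fun a => (F.equivFin.symm (Fin.castLE hfib a)).1, fun a => (hF1 _ (Subtype.prop _)).1, ?_⟩
  intro a b hab
  have hne : (F.equivFin.symm (Fin.castLE hfib a)).1 ≠ (F.equivFin.symm (Fin.castLE hfib b)).1 := by
    intro he
    have := F.equivFin.symm.injective (Subtype.ext he)
    exact hab (Fin.castLE_injective hfib this)
  have hx := (F.equivFin.symm (Fin.castLE hfib a)).2
  have hy := (F.equivFin.symm (Fin.castLE hfib b)).2
  have hc := h1 _ hx _ hy hne
  refine ⟨hc, fun he => hne ?_⟩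
  obtain ⟨⟨x1, x2, x3⟩, x4, x5⟩ := hF1 _ hx
  obtain ⟨⟨y1, y2, y3⟩, y4, y5⟩ := hF1 _ hy
  refine h.eq_of _ _ {p, q} (Or.inr x1) (Or.inr y1) ?_ ?_
  · intro t ht
    simp only [Finset.mem_insert, Finset.mem_singleton] at ht
    rcases ht with rfl | rfl
    · exact ⟨x2, he⟩
    · exact ⟨x3, by rw [x5, y5]⟩
  · rw [hc, Finset.card_pair hpq]


/-- The set of points encoded by a bit mask. -/
def bset (m : ℕ) : Finset (Fin 8) := Finset.univ.filter fun i => m.testBit i.1 = true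

theorem bset_card : ∀ m < 128, (bset m).card = pc m := by
  unfold bset pc
  decide +kernel

theorem bset_seven : ∀ m < 128, (7 : Fin 8) ∉ bset m := by
  intro m hm
  simp only [bset, Finset.mem_filter, Finset.mem_univ, true_and]
  rw [Nat.testBit_lt_two_pow (by simpa using hm)]
  simp

theorem bset_and (m m' : ℕ) : bset (m &&& m') = bset m ∩ bset m' := by
  ext i
  simp [bset]

theorem bset_inj (m m' : ℕ) (h : m < 128) (h' : m' < 128) (e : bset m = bset m') : m = m' := by
  apply Nat.eq_of_testBit_eq
  intro i
  by_cases hi : i < 7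
  · have : (⟨i, by omega⟩ : Fin 8) ∈ bset m ↔ (⟨i, by omega⟩ : Fin 8) ∈ bset m' := by rw [e]
    simp only [bset, Finset.mem_filter, Finset.mem_univ, true_and] at this
    rw [Bool.eq_iff_iff]
    exact this
  · have h2 : 2 ^ 7 ≤ 2 ^ i := Nat.pow_le_pow_right (by norm_num) (by omega)
    rw [Nat.testBit_lt_two_pow (by omega), Nat.testBit_lt_two_pow (by omega)]

theorem bset_surj (t : Finset (Fin 8)) (ht : (7 : Fin 8) ∉ t) : ∃ m < 128, bset m = t := by
  refine ⟨Nat.ofBits fun i : Fin 7 => decide (i.castSucc ∈ t), ?_, ?_⟩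
  · exact Nat.ofBits_lt_two_pow _
  · ext i
    simp only [bset, Finset.mem_filter, Finset.mem_univ, true_and]
    by_cases hi : i.1 < 7
    · rw [Nat.testBit_ofBits_lt _ _ hi, decide_eq_true_iff]
      rfl
    · rw [Nat.testBit_ofBits_ge _ _ (by omega)]
      have : i = 7 := by
        apply Fin.ext
        have := i.2
        change i.1 = 7
        omega
      simp [this, ht]

theorem itm_iff (m : ℕ) : itm m = true ↔ m < 128 ∧ (pc m = 2 ∨ pc m = 3) := by
  simp [itm]

/-- Codes of the items used to name the colours. -/
def nameCode (a : Fin 6) : ℕ := ![3, 7, 11, 19, 35, 67] a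

theorem nameCode_spec : (∀ a, itm (nameCode a) = true) ∧ ∀ a b, a ≠ b →
    nameCode a ≠ nameCode b ∧ 2 ≤ pc (nameCode a &&& nameCode b) := by
  unfold nameCode itm pc
  decide +kernel

theorem CfgW.contra {D : Set (Fin 8 → Fin 7)} {w : Fin 8 → Fin 7}
    {W : Finset (Fin 8) → Fin 8 → Fin 7} (h : CfgW D w W) (ρ : Fin 8 → Fin 8)
    (hρ : Function.Injective ρ) (p12 : W {ρ 0, ρ 1} (ρ 7) = W {ρ 0, ρ 2} (ρ 7))
    (p34 : W {ρ 0, ρ 3} (ρ 7) = W {ρ 0, ρ 4} (ρ 7))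
    (p56 : W {ρ 0, ρ 5} (ρ 7) = W {ρ 0, ρ 6} (ρ 7)) : False := by
  set S : ℕ → Finset (Fin 8) := fun m => (bset m).image ρ with hS
  have hScard : ∀ m < 128, (S m).card = pc m := by
    intro m hm
    rw [hS]
    simp only
    rw [Finset.card_image_of_injective _ hρ, bset_card m hm]
  have hS7 : ∀ m < 128, ρ 7 ∉ S m := by
    intro m hm hc
    rw [Finset.mem_image] at hc
    obtain ⟨a, ha, e⟩ := hc
    rw [hρ e] at ha
    exact bset_seven m hm ha
  have hSand : ∀ m m', S (m &&& m') = S m ∩ S m' := by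
    intro m m'
    simp only [hS]
    rw [bset_and, Finset.image_inter _ _ hρ]
  have hSinj : ∀ m m', m < 128 → m' < 128 → S m = S m' → m = m' := by
    intro m m' h1 h2 e
    exact bset_inj m m' h1 h2 (Finset.image_injective hρ e)
  have hlt_and : ∀ m m' : ℕ, m < 128 → m &&& m' < 128 := fun m m' h1 =>
    lt_of_le_of_lt Nat.and_le_left h1
  have hit : ∀ m, itm m = true → (S m).card = 2 ∨ (S m).card = 3 := by
    intro m hm
    rw [itm_iff] at hm
    rw [hScard m hm.1]
    exact hm.2
  have hlt : ∀ m, itm m = true → m < 128 := fun m hm => ((itm_iff m).1 hm).1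
  set c : ℕ → Fin 7 := fun m => W (S m) (ρ 7) with hc
  have hcw : ∀ m, itm m = true → c m ≠ w (ρ 7) := by
    intro m hm he
    exact hS7 m (hlt m hm) ((h.ag _ (hit m hm) _).1 he)
  have hcB : ∀ x y, itm x = true → itm y = true → x ≠ y → 2 ≤ pc (x &&& y) → c x ≠ c y := by
    intro x y hx hy hxy h2 he
    refine hxy (hSinj x y (hlt x hx) (hlt y hy) (h.eq_of _ _ {ρ 7} (hit x hx) (hit y hy) ?_ ?_))
    · intro t ht
      rw [Finset.mem_singleton] at ht
      subst ht
      exact ⟨hS7 x (hlt x hx), he⟩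
    · rw [← hSand, hScard _ (hlt_and x y (hlt x hx)), Finset.card_singleton]
      omega
  set f : Fin 7 → Fin 7 := fun a => if ha : a.1 < 6 then c (nameCode ⟨a.1, ha⟩) else w (ρ 7)
    with hf
  have hfinj : Function.Injective f := by
    intro a b hab
    simp only [hf] at hab
    by_cases ha : a.1 < 6 <;> by_cases hb : b.1 < 6
    · rw [dif_pos ha, dif_pos hb] at hab
      by_contra hne
      have hne' : (⟨a.1, ha⟩ : Fin 6) ≠ ⟨b.1, hb⟩ := by
        intro he
        apply hne
        rw [Fin.mk.injEq] at he
        exact Fin.ext he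
      have h2 := nameCode_spec.2 _ _ hne'
      exact hcB _ _ (nameCode_spec.1 _) (nameCode_spec.1 _) h2.1 h2.2 hab
    · rw [dif_pos ha, dif_neg hb] at hab
      exact absurd hab (hcw _ (nameCode_spec.1 _))
    · rw [dif_neg ha, dif_pos hb] at hab
      exact absurd hab.symm (hcw _ (nameCode_spec.1 _))
    · apply Fin.ext
      omega
  have hfbij : Function.Bijective f := Finite.injective_iff_bijective.1 hfinj
  set e := Equiv.ofBijective f hfbij with he
  have hef : ∀ a, e.symm (f a) = a := fun a => Equiv.ofBijective_symm_apply_apply f hfbij a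
  have hname : ∀ a : Fin 6, (e.symm (c (nameCode a))).1 = a.1 := by
    intro a
    have h1 : f ⟨a.1, by omega⟩ = c (nameCode a) := by
      simp only [hf]
      rw [dif_pos a.2]
    rw [← h1, hef]
  have hS2 : ∀ a b : Fin 8, ∀ m, bset m = {a, b} → S m = {ρ a, ρ b} := by
    intro a b m hm
    simp only [hS]
    rw [hm, Finset.image_insert, Finset.image_singleton]
  have c3 : c 3 = W {ρ 0, ρ 1} (ρ 7) := by
    simp only [hc]; rw [hS2 0 1 3 (by unfold bset; decide)]
  have c5 : c 5 = W {ρ 0, ρ 2} (ρ 7) := by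
    simp only [hc]; rw [hS2 0 2 5 (by unfold bset; decide)]
  have c9 : c 9 = W {ρ 0, ρ 3} (ρ 7) := by
    simp only [hc]; rw [hS2 0 3 9 (by unfold bset; decide)]
  have c17 : c 17 = W {ρ 0, ρ 4} (ρ 7) := by
    simp only [hc]; rw [hS2 0 4 17 (by unfold bset; decide)]
  have c33 : c 33 = W {ρ 0, ρ 5} (ρ 7) := by
    simp only [hc]; rw [hS2 0 5 33 (by unfold bset; decide)]
  have c65 : c 65 = W {ρ 0, ρ 6} (ρ 7) := by
    simp only [hc]; rw [hS2 0 6 65 (by unfold bset; decide)]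
  have hk3 : (e.symm (c 3)).1 = 0 := hname 0
  have hkinj : ∀ x y, (e.symm (c x)).1 = (e.symm (c y)).1 → c x = c y := by
    intro x y hxy
    exact e.symm.injective (Fin.ext hxy)
  refine no_kap (fun m => (e.symm (c m)).1) ?_ ?_ ?_ hk3 ?_ (hname 1) (hname 2) (hname 3)
    (hname 4) (hname 5) ?_ ?_ ?_
  · intro m hm
    by_contra hge
    have h6 : f 6 = w (ρ 7) := by
      simp [hf]
    have h7 : (e.symm (c m)) = 6 := by
      apply Fin.ext
      have := (e.symm (c m)).2
      change _ = 6
      omega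
    rw [Equiv.symm_apply_eq] at h7
    exact hcw m hm (h7.trans h6)
  · intro x y hx hy hxy h2 he
    exact hcB x y hx hy hxy h2 (hkinj x y he)
  · intro x y z hx hy hz px py pz hxy hyz hxz h0 e1 e2
    have hne : ∃ i, i ∈ S (x &&& y &&& z) := by
      by_contra hno
      push Not at hno
      have h1 : S (x &&& y &&& z) = S 0 := by
        rw [Finset.eq_empty_of_forall_notMem hno]
        simp [hS, bset]
      exact h0 (hSinj _ _ (hlt_and _ _ (hlt_and _ _ (hlt x hx))) (by norm_num) h1)
    obtain ⟨i, hi⟩ := hne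
    rw [hSand, hSand, Finset.mem_inter, Finset.mem_inter] at hi
    have lx := hlt x hx
    have ly := hlt y hy
    have lz := hlt z hz
    exact h.deg' i (ρ 7) (S x) (S y) (S z) (by rw [hScard x lx, px]) (by rw [hScard y ly, py])
      (by rw [hScard z lz, pz]) hi.1.1 hi.1.2 hi.2 (hS7 x lx) (hS7 y ly) (hS7 z lz)
      (fun he => hxy (hSinj x y lx ly he)) (fun he => hyz (hSinj y z ly lz he))
      (fun he => hxz (hSinj x z lx lz he)) (hkinj x y e1) (hkinj y z e2)
  · have : c 5 = c 3 := by rw [c3, c5, p12]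
    simp only [this]
    exact hk3
  · have : c 9 = c 17 := by rw [c9, c17, p34]
    simp only [this]
  · have : c 33 = c 65 := by rw [c33, c65, p56]
    simp only [this]
  · intro q hq
    have hq7 : ρ 7 ≠ ρ ⟨q, by omega⟩ := by
      intro he
      have := congrArg Fin.val (hρ he)
      change 7 = q at this
      omega
    obtain ⟨g, hg1, hg2⟩ := h.pasch (ρ 7) (ρ ⟨q, by omega⟩) hq7
    have hsur : Function.Surjective ρ := Finite.injective_iff_surjective.1 hρ
    have hm : ∀ a, ∃ m, m < 128 ∧ S m = g a := by
      intro a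
      obtain ⟨m, hm, hm2⟩ := bset_surj (Finset.univ.filter fun i => ρ i ∈ g a)
        (by simp [(hg1 a).2.1])
      refine ⟨m, hm, ?_⟩
      simp only [hS]
      rw [hm2]
      ext i
      obtain ⟨j, rfl⟩ := hsur i
      simp [hρ.eq_iff]
    choose m hm hmS using hm
    have hT : ∀ a, m a ∈ triplesOff q := by
      intro a
      have h1 : pc (m a) = 3 := by
        rw [← hScard _ (hm a), hmS, (hg1 a).1]
      have h2 : (m a).testBit q = false := by
        rw [Bool.eq_false_iff]
        intro hb
        apply (hg1 a).2.2
        rw [← hmS]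
        simp only [hS]
        refine Finset.mem_image_of_mem _ ?_
        simp [bset, hb]
      simp [triplesOff, hm a, h1, h2]
    have hM : ∀ a b, a ≠ b → meet1 (m a) (m b) = true := by
      intro a b hab
      rw [meet1, beq_iff_eq, ← hScard _ (hlt_and _ _ (hm a)), hSand, hmS, hmS]
      exact (hg2 a b hab).1
    have hK : ∀ a b, a ≠ b → (e.symm (c (m a))).1 ≠ (e.symm (c (m b))).1 := by
      intro a b hab he
      have := hkinj _ _ he
      simp only [hc] at this
      rw [hmS, hmS] at this
      exact (hg2 a b hab).2 this
    exact ⟨m 0, hT 0, m 1, hT 1, m 2, hT 2, m 3, hT 3,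
      ⟨hM _ _ (by decide), hM _ _ (by decide), hM _ _ (by decide), hM _ _ (by decide),
        hM _ _ (by decide), hM _ _ (by decide)⟩,
      hK _ _ (by decide), hK _ _ (by decide), hK _ _ (by decide), hK _ _ (by decide),
        hK _ _ (by decide), hK _ _ (by decide)⟩

theorem Cfg.elim_false {D : Set (Fin 8 → Fin 7)} {w : Fin 8 → Fin 7} (h0 : Cfg D w) : False := by
  obtain ⟨W, h⟩ := h0.exW
  have hdeg : ∀ i j k : Fin 8, i ≠ 0 → j ≠ 0 → k ≠ 0 → i ≠ 7 → j ≠ 7 → k ≠ 7 → i ≠ j → k ≠ j →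
      W {0, i} 7 = W {0, j} 7 → W {0, k} 7 = W {0, j} 7 → i = k := by
    intro i j k i0 j0 k0 i7 j7 k7 hij hkj e1 e2
    exact h.deg 0 j i k 7 j0.symm (by decide) j7 i0 hij i7 k0 hkj k7 e1 e2
  obtain ⟨j2, a20, a21, a27, e2⟩ := h.partner 0 1 7 (by decide) (by decide) (by decide)
  obtain ⟨j3, b3⟩ := exists_notMem_lt {0, 7, 1, j2} (lt_of_le_of_lt Finset.card_le_four (by norm_num))
  simp only [Finset.mem_insert, Finset.mem_singleton, not_or] at b3
  obtain ⟨a30, a37, a31, a32⟩ := b3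
  obtain ⟨j4, a40, a43, a47, e4⟩ := h.partner 0 j3 7 (Ne.symm a30) (by decide) a37
  have a41 : j4 ≠ 1 := by
    rintro rfl
    exact a32 (hdeg j3 1 j2 a30 (by decide) a20 a37 (by decide) a27 a31 a21 e4.symm e2)
  have a42 : j4 ≠ j2 := by
    rintro rfl
    exact a31 (hdeg j3 j4 1 a30 a20 (by decide) a37 a27 (by decide) a32 a21.symm e4.symm e2.symm)
  obtain ⟨j5, b5⟩ := exists_notMem_lt {0, 7, 1, j2, j3, j4}
    (lt_of_le_of_lt Finset.card_le_six (by norm_num))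
  simp only [Finset.mem_insert, Finset.mem_singleton, not_or] at b5
  obtain ⟨a50, a57, a51, a52, a53, a54⟩ := b5
  obtain ⟨j6, a60, a65, a67, e6⟩ := h.partner 0 j5 7 (Ne.symm a50) (by decide) a57
  have a61 : j6 ≠ 1 := by
    rintro rfl
    exact a52 (hdeg j5 1 j2 a50 (by decide) a20 a57 (by decide) a27 a51 a21 e6.symm e2)
  have a62 : j6 ≠ j2 := by
    rintro rfl
    exact a51 (hdeg j5 j6 1 a50 a20 (by decide) a57 a27 (by decide) a52 a21.symm e6.symm e2.symm)
  have a63 : j6 ≠ j3 := by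
    rintro rfl
    exact a54 (hdeg j5 j6 j4 a50 a60 a40 a57 a67 a47 a53 a43 e6.symm e4)
  have a64 : j6 ≠ j4 := by
    rintro rfl
    exact a53 (hdeg j5 j6 j3 a50 a60 a30 a57 a67 a37 a54 (Ne.symm a43) e6.symm e4.symm)
  refine h.contra ![0, 1, j2, j3, j4, j5, j6, 7] ?_ e2.symm e4.symm e6.symm
  have hnd : (List.ofFn ![0, 1, j2, j3, j4, j5, j6, (7 : Fin 8)]).Nodup := by
    simp [List.ofFn_succ, a27, a37, a47, a57, a67, Ne.symm a20, Ne.symm a21,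
      Ne.symm a30, Ne.symm a31, Ne.symm a32, Ne.symm a40, Ne.symm a41,
      Ne.symm a42, Ne.symm a43, Ne.symm a50, Ne.symm a51, Ne.symm a52, Ne.symm a53,
      Ne.symm a54, Ne.symm a60, Ne.symm a61, Ne.symm a62, Ne.symm a63,
      Ne.symm a64, Ne.symm a65]
  exact List.nodup_ofFn.1 hnd


theorem ame_ext {n : ℕ} {ψ : (Fin n → Fin 7) → ℂ} (h : IsAME n 7 ψ) (B : Finset (Fin n))
    (hB : B.card = n / 2) (g : Fin n → Fin 7) : ∃ s, ψ s ≠ 0 ∧ ∀ i ∈ B, s i = g i := by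
  have h1 := h.2 B hB.le (fun i => g i.1) (fun i => g i.1)
  rw [if_pos rfl] at h1
  have h2 : (((7 : ℕ) : ℂ) ^ B.card)⁻¹ ≠ 0 := by
    apply inv_ne_zero
    apply pow_ne_zero
    norm_num
  rw [← h1] at h2
  obtain ⟨a, _, ha⟩ := Finset.exists_ne_zero_of_sum_ne_zero h2
  refine ⟨_, left_ne_zero_of_mul ha, ?_⟩
  intro i hi
  simp [combine, hi]

theorem ame_uniq {n : ℕ} {ψ : (Fin n → Fin 7) → ℂ} (h : IsAME n 7 ψ)
    (hm : HasMinimalSupport n 7 ψ) (B : Finset (Fin n))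
    (hB : n / 2 ≤ B.card) (s s' : Fin n → Fin 7) (hs : ψ s ≠ 0) (hs' : ψ s' ≠ 0)
    (he : ∀ i ∈ B, s i = s' i) : s = s' := by
  obtain ⟨B', hB', hc⟩ := Finset.exists_subset_card_eq hB
  let r : {s : Fin n → Fin 7 // ψ s ≠ 0} → ({i // i ∈ B'} → Fin 7) := fun s i => s.1 i.1
  have hsur : Function.Surjective r := by
    intro g
    obtain ⟨s, h1, h2⟩ := ame_ext h B' hc (fun i => if hi : i ∈ B' then g ⟨i, hi⟩ else 0)
    refine ⟨⟨s, h1⟩, ?_⟩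
    funext i
    change s i.1 = g i
    rw [h2 i.1 i.2, dif_pos i.2]
  have hcard : Nat.card {s : Fin n → Fin 7 // ψ s ≠ 0} ≤ Nat.card ({i // i ∈ B'} → Fin 7) := by
    have h1 : Nat.card {s : Fin n → Fin 7 // ψ s ≠ 0} = 7 ^ (n / 2) := hm
    rw [h1]
    simp [Nat.card_eq_fintype_card, hc]
  have hbij := hsur.bijective_of_nat_card_le hcard
  have : (⟨s, hs⟩ : {s : Fin n → Fin 7 // ψ s ≠ 0}) = ⟨s', hs'⟩ := by
    apply hbij.1
    funext i
    exact he i.1 (hB' i.2)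
  exact congrArg Subtype.val this

theorem no_ame (n : ℕ) (hn : 9 ≤ n) (ψ : (Fin n → Fin 7) → ℂ) (h : IsAME n 7 ψ)
    (hm : HasMinimalSupport n 7 ψ) : False := by
  obtain ⟨k, hk⟩ : ∃ k, k = n / 2 := ⟨_, rfl⟩
  have hk4 : 4 ≤ k := by omega
  have hkn : k + 5 ≤ n := by omega
  let ι : Fin 8 ↪ Fin n := ⟨fun j => ⟨j.1, by omega⟩, fun a b hab => Fin.ext (Fin.mk.inj_iff.1 hab)⟩
  have hι : ∀ j : Fin 8, (ι j).1 = j.1 := fun j => rfl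
  let Z : Finset (Fin n) := (Finset.Ico 8 (k + 5)).attachFin (fun m hm => by
    rw [Finset.mem_Ico] at hm; omega)
  let Z' : Finset (Fin n) := (Finset.Ico 9 (k + 5)).attachFin (fun m hm => by
    rw [Finset.mem_Ico] at hm; omega)
  have hZc : Z.card = k - 3 := by
    simp only [Z, Finset.card_attachFin, Nat.card_Ico]; omega
  have hZc' : Z'.card = k - 4 := by
    simp only [Z', Finset.card_attachFin, Nat.card_Ico]; omega
  have hZ : ∀ i, i ∈ Z ↔ 8 ≤ i.1 ∧ i.1 < k + 5 := by
    intro i; simp [Z]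
  have hZ' : ∀ i, i ∈ Z' ↔ 9 ≤ i.1 ∧ i.1 < k + 5 := by
    intro i; simp [Z']
  have hcard : ∀ S : Finset (Fin 8), (S.map ι ∪ Z).card = S.card + (k - 3) := by
    intro S
    rw [Finset.card_union_of_disjoint, Finset.card_map, hZc]
    rw [Finset.disjoint_left]
    intro i hi hi2
    obtain ⟨j, _, rfl⟩ := Finset.mem_map.1 hi
    have := ((hZ _).1 hi2).1
    rw [hι] at this
    omega
  have hcard' : ∀ S : Finset (Fin 8), (S.map ι ∪ Z').card = S.card + (k - 4) := by
    intro S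
    rw [Finset.card_union_of_disjoint, Finset.card_map, hZc']
    rw [Finset.disjoint_left]
    intro i hi hi2
    obtain ⟨j, _, rfl⟩ := Finset.mem_map.1 hi
    have := ((hZ' _).1 hi2).1
    rw [hι] at this
    omega
  have i8 : 8 < n := by omega
  obtain ⟨s0, hs0, h0⟩ := ame_ext h (({0, 1, 2} : Finset (Fin 8)).map ι ∪ Z)
    (by
      have h3 : ({0, 1, 2} : Finset (Fin 8)).card = 3 := by decide
      rw [hcard, h3]; omega)
    (fun i => if i.1 = 8 then 1 else 0)
  have h08 : s0 ⟨8, i8⟩ = 1 := by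
    rw [h0 _ (Finset.mem_union_right _ ((hZ _).2 ⟨le_refl _, by simp only; omega⟩))]
    simp
  have h09 : ∀ i ∈ Z', s0 i = 0 := by
    intro i hi
    have hi2 := (hZ' i).1 hi
    rw [h0 _ (Finset.mem_union_right _ ((hZ _).2 ⟨by omega, hi2.2⟩)), if_neg (by omega)]
  let D : Set (Fin 8 → Fin 7) := {d | ∃ s, ψ s ≠ 0 ∧ (∀ j, s (ι j) = d j) ∧ ∀ i ∈ Z, s i = 0}
  have hC : Cfg D (fun j => s0 (ι j)) := by
    refine ⟨?_, ?_, ?_⟩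
    · intro S hS g
      obtain ⟨s, hs, h1⟩ := ame_ext h (S.map ι ∪ Z) (by rw [hcard, hS]; omega)
        (fun i => if hi : i.1 < 8 then g ⟨i.1, hi⟩ else 0)
      refine ⟨fun j => s (ι j), ⟨s, hs, fun _ => rfl, ?_⟩, ?_⟩
      · intro i hi
        rw [h1 i (Finset.mem_union_right _ hi), dif_neg]
        have := ((hZ i).1 hi).1
        omega
      · intro i hi
        change s (ι i) = g i
        rw [h1 (ι i) (Finset.mem_union_left _ (Finset.mem_map_of_mem ι hi))]
        exact dif_pos i.2
    · rintro d ⟨s, hs, h1, h2⟩ d' ⟨s', hs', h1', h2'⟩ S hS he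
      have : s = s' := by
        refine ame_uniq h hm (S.map ι ∪ Z) (by rw [hcard]; omega) s s' hs hs' ?_
        intro i hi
        rcases Finset.mem_union.1 hi with hi | hi
        · obtain ⟨j, hj, rfl⟩ := Finset.mem_map.1 hi
          rw [h1, h1', he j hj]
        · rw [h2 i hi, h2' i hi]
      funext j
      rw [← h1, ← h1', this]
    · rintro d ⟨s, hs, h1, h2⟩
      by_contra hgt
      have : s = s0 := by
        refine ame_uniq h hm ((agr (fun j => s0 (ι j)) d).map ι ∪ Z') (by rw [hcard']; omega)
          s s0 hs hs0 ?_
        intro i hi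
        rcases Finset.mem_union.1 hi with hi | hi
        · obtain ⟨j, hj, rfl⟩ := Finset.mem_map.1 hi
          rw [h1]
          exact (mem_agr _ _ _).1 hj
        · have hi2 := (hZ' i).1 hi
          rw [h09 i hi, h2 i ((hZ i).2 ⟨by omega, hi2.2⟩)]
      have h3 := h2 ⟨8, i8⟩ ((hZ _).2 ⟨le_refl _, by simp only; omega⟩)
      rw [this, h08] at h3
      exact absurd h3 (by decide)
  exact hC.elim_false


/-- Evaluation of the message polynomial; the last place is the leading coefficient. -/
def ev (a b c d : ZMod 7) (i : Fin 8) : ZMod 7 :=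
  if i.1 < 7 then a + i.1 * (b + i.1 * (c + i.1 * d)) else d

theorem ev_zeros : ∀ a b c d : ZMod 7,
    4 ≤ ((List.finRange 8).filter (fun i => ev a b c d i == 0)).length →
      a = 0 ∧ b = 0 ∧ c = 0 ∧ d = 0 := by
  unfold ev
  decide +kernel

def encMsg (m : Fin 4 → ZMod 7) (i : Fin 8) : Fin 7 := ev (m 0) (m 1) (m 2) (m 3) i

theorem encMsg_inj (m m' : Fin 4 → ZMod 7) (S : Finset (Fin 8)) (hS : 4 ≤ S.card)
    (h : ∀ i ∈ S, encMsg m i = encMsg m' i) : m = m' := by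
  have h1 : ∀ i ∈ S, ev (m 0 - m' 0) (m 1 - m' 1) (m 2 - m' 2) (m 3 - m' 3) i = 0 := by
    intro i hi
    have h2 : ev (m 0) (m 1) (m 2) (m 3) i = ev (m' 0) (m' 1) (m' 2) (m' 3) i := h i hi
    have h3 : ev (m 0 - m' 0) (m 1 - m' 1) (m 2 - m' 2) (m 3 - m' 3) i =
        ev (m 0) (m 1) (m 2) (m 3) i - ev (m' 0) (m' 1) (m' 2) (m' 3) i := by
      unfold ev
      split_ifs
      · ring
      · rfl
    rw [h3, h2, sub_self]
  have h2 := ev_zeros (m 0 - m' 0) (m 1 - m' 1) (m 2 - m' 2) (m 3 - m' 3) ?_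
  · funext i
    fin_cases i
    · exact sub_eq_zero.1 h2.1
    · exact sub_eq_zero.1 h2.2.1
    · exact sub_eq_zero.1 h2.2.2.1
    · exact sub_eq_zero.1 h2.2.2.2
  · refine hS.trans ?_
    have hsub : S ⊆ ((List.finRange 8).filter (fun i =>
        ev (m 0 - m' 0) (m 1 - m' 1) (m 2 - m' 2) (m 3 - m' 3) i == 0)).toFinset := by
      intro i hi
      simp [h1 i hi]
    exact (Finset.card_le_card hsub).trans (List.toFinset_card_le _)

theorem encMsg_surj (S : Finset (Fin 8)) (hS : S.card = 4) (g : Fin 8 → Fin 7) :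
    ∃ m, ∀ i ∈ S, encMsg m i = g i := by
  let r : (Fin 4 → ZMod 7) → ({i // i ∈ S} → Fin 7) := fun m i => encMsg m i.1
  have hinj : Function.Injective r := by
    intro m m' he
    exact encMsg_inj m m' S hS.ge (fun i hi => congrFun he ⟨i, hi⟩)
  have hbij : Function.Bijective r := by
    rw [Fintype.bijective_iff_injective_and_card]
    refine ⟨hinj, ?_⟩
    simp [hS, ZMod.card]
  obtain ⟨m, hm⟩ := hbij.2 (fun i => g i.1)
  exact ⟨m, fun i hi => congrFun hm ⟨i, hi⟩⟩

def codeSet : Finset (Fin 8 → Fin 7) := Finset.univ.image encMsg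

theorem mem_codeSet (s : Fin 8 → Fin 7) : s ∈ codeSet ↔ ∃ m, encMsg m = s := by
  simp [codeSet]

theorem codeSet_card : codeSet.card = 2401 := by
  have hinj : Function.Injective encMsg := fun m m' h =>
    encMsg_inj m m' Finset.univ (by simp) (fun i _ => congrFun h i)
  rw [codeSet, Finset.card_image_of_injective _ hinj]
  simp [ZMod.card]

def codeState (s : Fin 8 → Fin 7) : ℂ := if s ∈ codeSet then 49⁻¹ else 0

theorem codeState_count (B : Finset (Fin 8)) (hB : B.card ≤ 4)
    (b : {i : Fin 8 // i ∈ B} → Fin 7) :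
    (Finset.univ.filter fun a : {i : Fin 8 // i ∉ B} → Fin 7 => combine B a b ∈ codeSet).card =
      7 ^ (4 - B.card) := by
  obtain ⟨T, hBT, hT⟩ := Finset.exists_superset_card_eq (n := 4) hB (by simp)
  have hnot : ∀ i : {i // i ∈ T \ B}, i.1 ∉ B := fun i => (Finset.mem_sdiff.1 i.2).2
  let r : {a : {i : Fin 8 // i ∉ B} → Fin 7 // combine B a b ∈ codeSet} →
      ({i // i ∈ T \ B} → Fin 7) := fun a i => a.1 ⟨i.1, hnot i⟩
  have hbij : Function.Bijective r := by
    constructor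
    · rintro ⟨a, ha⟩ ⟨a', ha'⟩ he
      obtain ⟨m, hm⟩ := (mem_codeSet _).1 ha
      obtain ⟨m', hm'⟩ := (mem_codeSet _).1 ha'
      have hmm : m = m' := by
        refine encMsg_inj m m' T hT.ge ?_
        intro i hi
        rw [hm, hm']
        by_cases hiB : i ∈ B
        · simp [combine, hiB]
        · simp only [combine, dif_neg hiB]
          exact congrFun he ⟨i, Finset.mem_sdiff.2 ⟨hi, hiB⟩⟩
      rw [Subtype.mk.injEq]
      funext i
      have := congrFun (hm.symm.trans ((congrArg encMsg hmm).trans hm')) i.1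
      simpa [combine, i.2] using this
    · intro g
      obtain ⟨m, hm⟩ := encMsg_surj T hT (fun i => if hi : i ∈ B then b ⟨i, hi⟩ else
        if hi2 : i ∈ T \ B then g ⟨i, hi2⟩ else 0)
      have hco : combine B (fun i => encMsg m i.1) b = encMsg m := by
        funext i
        by_cases hi : i ∈ B
        · rw [hm i (hBT hi)]
          simp [combine, hi]
        · simp [combine, hi]
      refine ⟨⟨fun i => encMsg m i.1, (mem_codeSet _).2 ⟨m, hco.symm⟩⟩, ?_⟩
      funext i
      change encMsg m i.1 = g i
      rw [hm i.1 (Finset.mem_sdiff.1 i.2).1, dif_neg (hnot i), dif_pos i.2]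
  have := Fintype.card_of_bijective hbij
  rw [Fintype.card_subtype] at this
  rw [this, Fintype.card_fun, Fintype.card_fin, Fintype.card_coe,
    Finset.card_sdiff_of_subset hBT, hT]

theorem codeState_isAME : IsAME 8 7 codeState := by
  constructor
  · have h1 : ∀ s, ‖codeState s‖ ^ 2 = if s ∈ codeSet then (2401 : ℝ)⁻¹ else 0 := by
      intro s
      unfold codeState
      split_ifs
      · norm_num
      · norm_num
    simp_rw [h1]
    rw [Finset.sum_ite_mem, Finset.univ_inter, Finset.sum_const, codeSet_card]
    norm_num
  · intro B hB b b'
    have hB4 : B.card ≤ 4 := hB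
    split_ifs with hbb
    · subst hbb
      have h1 : ∀ a : {i : Fin 8 // i ∉ B} → Fin 7,
          codeState (combine B a b) * (starRingEnd ℂ) (codeState (combine B a b)) =
            if combine B a b ∈ codeSet then (2401 : ℂ)⁻¹ else 0 := by
        intro a
        unfold codeState
        split_ifs
        · rw [map_inv₀, Complex.conj_ofNat]; norm_num
        · simp
      simp_rw [h1]
      rw [← Finset.sum_filter, Finset.sum_const, codeState_count B hB4 b]
      obtain ⟨t, ht⟩ : ∃ t, t = B.card := ⟨_, rfl⟩
      rw [← ht] at hB4 ⊢
      interval_cases t <;> norm_num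
    · apply Finset.sum_eq_zero
      intro a _
      by_contra hne
      have hl := left_ne_zero_of_mul hne
      have hr := right_ne_zero_of_mul hne
      rw [ne_eq, map_eq_zero] at hr
      unfold codeState at hl hr
      have hl' : combine B a b ∈ codeSet := by
        by_contra hc
        exact hl (if_neg hc)
      have hr' : combine B a b' ∈ codeSet := by
        by_contra hc
        exact hr (if_neg hc)
      obtain ⟨m, hm⟩ := (mem_codeSet _).1 hl'
      obtain ⟨m', hm'⟩ := (mem_codeSet _).1 hr'
      have hmm : m = m' := by
        refine encMsg_inj m m' Bᶜ ?_ ?_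
        · rw [Finset.card_compl, Fintype.card_fin]; omega
        · intro i hi
          rw [Finset.mem_compl] at hi
          rw [hm, hm']
          simp [combine, hi]
      apply hbb
      funext i
      have := congrFun (hm.symm.trans ((congrArg encMsg hmm).trans hm')) i.1
      simpa [combine, i.2] using this

theorem codeState_minimal : HasMinimalSupport 8 7 codeState := by
  have h1 : {s : Fin 8 → Fin 7 | codeState s ≠ 0} = (codeSet : Set (Fin 8 → Fin 7)) := by
    ext s
    simp [codeState]
  rw [HasMinimalSupport, h1, Set.ncard_coe_finset, codeSet_card]
  norm_num


/-- `𝒩(7) = 8`: a minimally supported `AME(8,7)` state exists, and no minimally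
supported `AME(n,7)` state exists for `n ≥ 9`. -/
theorem N_seven_eq_eight :
    (∃ ψ : (Fin 8 → Fin 7) → ℂ, IsAME 8 7 ψ ∧ HasMinimalSupport 8 7 ψ) ∧
    (∀ n : ℕ, 9 ≤ n →
      ¬ ∃ ψ : (Fin n → Fin 7) → ℂ, IsAME n 7 ψ ∧ HasMinimalSupport n 7 ψ) := by
  refine ⟨⟨codeState, codeState_isAME, codeState_minimal⟩, ?_⟩
  rintro n hn ⟨ψ, h, hm⟩
  exact no_ame n hn ψ h hm

end AMEPaper
end
end
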